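/- Let C ∈ RH∞^{n×n} be real-rational and γ > 0. Then the following are equivalent: (i) [P,C] is stable for every P in N₀ satisfying P(0) ≤ γI; (ii) [P,C] is stable for every P in N₀ satisfying 0 ≤ P(0) ≤ γI; (iii) C is strictly negative imaginary (SNI), C(∞) ≥ 0 (positive semidefinite), and C(0) < (1/γ)I. -/

import Mathlib

open Matrix Polynomial Filter Topology
open scoped ComplexOrder

noncomputable section

namespace NIControl

/-- Evaluate a real-rational function at a complex point (junk value at poles). -/
def evalC (f : RatFunc ℝ) (s : ℂ) : ℂ :=
  f.eval (algebraMap ℝ ℂ) s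

/-- `s` is a pole of the real-rational function `f`
(the reduced denominator vanishes at `s`). -/
def IsPoleAt (f : RatFunc ℝ) (s : ℂ) : Prop :=
  f.denom.eval₂ (algebraMap ℝ ℂ) s = 0

variable {n : ℕ}

/-- Pointwise evaluation of a real-rational transfer matrix at a complex point. -/
def evalM (G : Matrix (Fin n) (Fin n) (RatFunc ℝ)) (s : ℂ) : Matrix (Fin n) (Fin n) ℂ :=
  Matrix.of fun i j => evalC (G i j) s

/-- Pointwise evaluation of a real-rational transfer matrix at a real point. -/
def evalR (G : Matrix (Fin n) (Fin n) (RatFunc ℝ)) (x : ℝ) : Matrix (Fin n) (Fin n) ℝ :=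
  Matrix.of fun i j => (G i j).eval (RingHom.id ℝ) x

/-- Value at `s = ∞` of a proper real-rational function. -/
def atInfinity (f : RatFunc ℝ) : ℝ :=
  if f.num.degree = f.denom.degree then f.num.leadingCoeff / f.denom.leadingCoeff else 0

/-- The instantaneous gain `G(∞)` of a proper real-rational transfer matrix. -/
def evalInf (G : Matrix (Fin n) (Fin n) (RatFunc ℝ)) : Matrix (Fin n) (Fin n) ℝ :=
  Matrix.of fun i j => atInfinity (G i j)

/-- The matrix `G` has a pole at `s`. -/
def HasPole (G : Matrix (Fin n) (Fin n) (RatFunc ℝ)) (s : ℂ) : Prop :=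
  ∃ i j, IsPoleAt (G i j) s

/-- All entries of `G` are proper rational functions. -/
def Proper (G : Matrix (Fin n) (Fin n) (RatFunc ℝ)) : Prop :=
  ∀ i j, (G i j).num.degree ≤ (G i j).denom.degree

/-- All entries of `G` are strictly proper rational functions. -/
def StrictlyProper (G : Matrix (Fin n) (Fin n) (RatFunc ℝ)) : Prop :=
  ∀ i j, (G i j).num.degree < (G i j).denom.degree

/-- The pole of `G` at the origin (if any) is at most simple. -/
def NoDoubleOriginPole (G : Matrix (Fin n) (Fin n) (RatFunc ℝ)) : Prop :=
  ∀ i j, (G i j).denom.rootMultiplicity 0 ≤ 1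

/-- Membership in `RH∞`: proper and no poles in the closed right-half complex plane. -/
def MemRHinf {m : Type*} [Fintype m] (G : Matrix m m (RatFunc ℝ)) : Prop :=
  (∀ i j, (G i j).num.degree ≤ (G i j).denom.degree) ∧
  ∀ s : ℂ, 0 ≤ s.re → ∀ i j, ¬ IsPoleAt (G i j) s

/-- The point `jω` on the imaginary axis. -/
def jw (ω : ℝ) : ℂ := Complex.I * (ω : ℂ)

/-- The negative-imaginary frequency kernel `j (M − M*)`. -/
def niKer (M : Matrix (Fin n) (Fin n) ℂ) : Matrix (Fin n) (Fin n) ℂ :=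
  Complex.I • (M - Mᴴ)

/-- Negative imaginary (NI) real-rational transfer matrix. -/
def IsNI (G : Matrix (Fin n) (Fin n) (RatFunc ℝ)) : Prop :=
  Proper G ∧
  (∀ s : ℂ, 0 < s.re → ¬ HasPole G s) ∧
  (∀ ω : ℝ, 0 < ω → ¬ HasPole G (jw ω) → (niKer (evalM G (jw ω))).PosSemidef) ∧
  (∀ ω : ℝ, 0 < ω → HasPole G (jw ω) →
    ∃ R : Matrix (Fin n) (Fin n) ℂ, R.PosSemidef ∧
      Tendsto (fun s : ℂ => (s - jw ω) • Complex.I • evalM G s) (𝓝[≠] jw ω) (𝓝 R)) ∧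
  (HasPole G 0 →
    (∀ k : ℕ, 3 ≤ k → Tendsto (fun s : ℂ => s ^ k • evalM G s) (𝓝[≠] 0) (𝓝 0)) ∧
    ∃ R : Matrix (Fin n) (Fin n) ℂ, R.PosSemidef ∧
      Tendsto (fun s : ℂ => s ^ 2 • evalM G s) (𝓝[≠] 0) (𝓝 R))

/-- Strictly negative imaginary (SNI) real-rational transfer matrix. -/
def IsSNI (G : Matrix (Fin n) (Fin n) (RatFunc ℝ)) : Prop :=
  MemRHinf G ∧ ∀ ω : ℝ, 0 < ω → (niKer (evalM G (jw ω))).PosDef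

/-- Positive real (passive) real-rational transfer matrix. -/
def IsPositiveReal (G : Matrix (Fin n) (Fin n) (RatFunc ℝ)) : Prop :=
  MemRHinf G ∧ ∀ ω : ℝ, 0 ≤ ω → (evalM G (jw ω) + (evalM G (jw ω))ᴴ).PosSemidef

/-- Output strictly passive real-rational transfer matrix. -/
def IsOSP (G : Matrix (Fin n) (Fin n) (RatFunc ℝ)) : Prop :=
  MemRHinf G ∧ ∃ ε : ℝ, 0 < ε ∧ ∀ ω : ℝ, 0 ≤ ω →
    (evalM G (jw ω) + (evalM G (jw ω))ᴴ -
      (ε : ℂ) • ((evalM G (jw ω))ᴴ * evalM G (jw ω))).PosSemidef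

/-- Stability of the positive feedback interconnection `[P, C]`:
`[I; C] (I − P C)⁻¹ [I, P] ∈ RH∞`. -/
def FeedbackStable (P C : Matrix (Fin n) (Fin n) (RatFunc ℝ)) : Prop :=
  ((1 : Matrix (Fin n) (Fin n) (RatFunc ℝ)) - P * C).det ≠ 0 ∧
  MemRHinf (Matrix.fromBlocks
    (1 - P * C)⁻¹ ((1 - P * C)⁻¹ * P)
    (C * (1 - P * C)⁻¹) (C * (1 - P * C)⁻¹ * P))

/-- All eigenvalues of the complex matrix `M` are real and less than `c`. -/
def eigsRealAndLT (M : Matrix (Fin n) (Fin n) ℂ) (c : ℝ) : Prop :=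
  ∀ μ ∈ spectrum ℂ M, μ.im = 0 ∧ μ.re < c

/-- The (real) eigenvalues of the real matrix `M` are all real and its largest
eigenvalue is less than `c`. -/
def maxEigLT (M : Matrix (Fin n) (Fin n) ℝ) (c : ℝ) : Prop :=
  eigsRealAndLT (M.map (Complex.ofReal)) c

/-- Loewner order `A ≤ B` on real matrices. -/
def LoewnerLE (A B : Matrix (Fin n) (Fin n) ℝ) : Prop := (B - A).PosSemidef

/-- Strict Loewner order `A < B` on real matrices. -/
def LoewnerLT (A B : Matrix (Fin n) (Fin n) ℝ) : Prop := (B - A).PosDef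

/-!
Sufficiency: shifting the loop by the static bound `γ` replaces the pair `P`, `C` by
`(γ I - P(s)) / s` and `s C(s) (I - γ C(s))⁻¹`. The first has nonnegative Hermitian part on the open
right half-plane, the second positive definite Hermitian part on the closed right half-plane away
from the origin; both follow from the frequency-domain conditions on the imaginary axis by
Phragmén–Lindelöf and the minimum principle. The passivity estimate for their feedback connection
bounds the closed loop near every closed right half-plane point `s ≠ 0`, and at `s = 0` and `s = ∞`
the loop is a static one.

Necessity: each failure of a condition on `C` is destabilised by an explicit plant. A constant
rank-one plant forces `C(0) < γ⁻¹ I`, and a washout filter `k s / (s + 1) · x xᵀ` with `k < 0`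
forces `C(∞) ≥ 0`. A resonator with a pole at `jω` forces `C(jω)` to be invertible; if
`j (C(jω) - C(jω)*)` were not positive definite, then a plant whose value at `jω` is `S - j c I`,
with `S` Hermitian and `c ≥ 0`, would give `P(jω) C(jω)` the eigenvalue `1`.
-/

section Evaluation

variable {f : RatFunc ℝ} {A B : Matrix (Fin n) (Fin n) (RatFunc ℝ)} {s : ℂ} {l : Filter ℂ}

/-- The ring of rational functions without a pole at `s`, on which evaluation at `s` is a ring
homomorphism. -/
def regularAt (s : ℂ) : Subring (RatFunc ℝ) where
  carrier := {f | ¬ IsPoleAt f s}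
  mul_mem' {f g} hf hg h := by
    have := eval₂_eq_zero_of_dvd_of_eval₂_eq_zero _ s (RatFunc.denom_mul_dvd f g) h
    rw [eval₂_mul] at this
    exact mul_ne_zero hf hg this
  one_mem' := by simp [IsPoleAt]
  add_mem' {f g} hf hg h := by
    have := eval₂_eq_zero_of_dvd_of_eval₂_eq_zero _ s (RatFunc.denom_add_dvd f g) h
    rw [eval₂_mul] at this
    exact mul_ne_zero hf hg this
  zero_mem' := by simp [IsPoleAt]
  neg_mem' {f} hf h := by
    have hdvd : (-f).denom ∣ f.denom := by
      rw [RatFunc.denom_dvd f.denom_ne_zero]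
      exact ⟨-f.num, by rw [map_neg, neg_div, RatFunc.num_div_denom]⟩
    exact hf (eval₂_eq_zero_of_dvd_of_eval₂_eq_zero _ s hdvd h)

/-- Evaluation at `s` of the rational functions that have no pole there. -/
def evalHom (s : ℂ) : regularAt s →+* ℂ where
  toFun f := evalC f.1 s
  map_one' := RatFunc.eval_one _ _
  map_zero' := RatFunc.eval_zero _ _
  map_add' f g := RatFunc.eval_add _ _ f.2 g.2
  map_mul' f g := RatFunc.eval_mul _ _ f.2 g.2

lemma eventually_eval₂_ne_zero {p : ℝ[X]} (hp : p ≠ 0) :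
    ∀ᶠ s : ℂ in cofinite, p.eval₂ (algebraMap ℝ ℂ) s ≠ 0 := by
  have hfin := (p.map (algebraMap ℝ ℂ)).rootSet_finite ℂ
  refine hfin.subset fun s hs => ?_
  rw [mem_rootSet, Polynomial.map_ne_zero_iff (algebraMap ℝ ℂ).injective]
  exact ⟨hp, by simpa [eval₂_eq_eval_map] using hs⟩

lemma eventually_not_isPoleAt (f : RatFunc ℝ) : ∀ᶠ s in cofinite, ¬ IsPoleAt f s :=
  eventually_eval₂_ne_zero f.denom_ne_zero

lemma eventually_not_hasPole (A : Matrix (Fin n) (Fin n) (RatFunc ℝ)) :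
    ∀ᶠ s in cofinite, ¬ HasPole A s := by
  simp only [HasPole, not_exists, eventually_all]
  exact fun i j => eventually_not_isPoleAt (A i j)

lemma exists_mapMatrix_subtype_eq (hA : ¬ HasPole A s) :
    ∃ A' : Matrix (Fin n) (Fin n) (regularAt s), (regularAt s).subtype.mapMatrix A' = A := by
  simp only [HasPole, not_exists] at hA
  exact ⟨.of fun i j => ⟨A i j, hA i j⟩, rfl⟩

lemma evalM_mapMatrix_subtype (A' : Matrix (Fin n) (Fin n) (regularAt s)) :
    evalM ((regularAt s).subtype.mapMatrix A') s = (evalHom s).mapMatrix A' := rfl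

lemma evalM_mul (A B : Matrix (Fin n) (Fin n) (RatFunc ℝ)) :
    evalM (A * B) =ᶠ[cofinite] fun s => evalM A s * evalM B s := by
  filter_upwards [eventually_not_hasPole A, eventually_not_hasPole B] with s hA hB
  obtain ⟨A, rfl⟩ := exists_mapMatrix_subtype_eq hA
  obtain ⟨B, rfl⟩ := exists_mapMatrix_subtype_eq hB
  simp only [← map_mul, evalM_mapMatrix_subtype]

lemma evalM_add (A B : Matrix (Fin n) (Fin n) (RatFunc ℝ)) :
    evalM (A + B) =ᶠ[cofinite] fun s => evalM A s + evalM B s := by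
  filter_upwards [eventually_not_hasPole A, eventually_not_hasPole B] with s hA hB
  obtain ⟨A, rfl⟩ := exists_mapMatrix_subtype_eq hA
  obtain ⟨B, rfl⟩ := exists_mapMatrix_subtype_eq hB
  simp only [← map_add, evalM_mapMatrix_subtype]

lemma evalM_one_sub (A : Matrix (Fin n) (Fin n) (RatFunc ℝ)) :
    evalM (1 - A) =ᶠ[cofinite] fun s => 1 - evalM A s := by
  filter_upwards [eventually_not_hasPole A] with s hA
  obtain ⟨A, rfl⟩ := exists_mapMatrix_subtype_eq hA
  rw [← map_one (regularAt s).subtype.mapMatrix, ← map_sub, evalM_mapMatrix_subtype,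
    evalM_mapMatrix_subtype, map_sub, map_one]

lemma evalC_det (A : Matrix (Fin n) (Fin n) (RatFunc ℝ)) :
    evalC A.det =ᶠ[cofinite] fun s => (evalM A s).det := by
  filter_upwards [eventually_not_hasPole A] with s hA
  obtain ⟨A, rfl⟩ := exists_mapMatrix_subtype_eq hA
  rw [← RingHom.map_det, evalM_mapMatrix_subtype, ← RingHom.map_det]
  rfl

lemma evalM_one (s : ℂ) : evalM (1 : Matrix (Fin n) (Fin n) (RatFunc ℝ)) s = 1 := by
  rw [← map_one (regularAt s).subtype.mapMatrix, evalM_mapMatrix_subtype, map_one]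

lemma evalM_nonsing_inv (hA : A.det ≠ 0) :
    evalM A⁻¹ =ᶠ[cofinite] fun s => (evalM A s)⁻¹ := by
  filter_upwards [evalM_mul A A⁻¹] with s hs
  rw [A.mul_nonsing_inv (isUnit_iff_ne_zero.2 hA), evalM_one] at hs
  exact (Matrix.inv_eq_right_inv hs.symm).symm

lemma evalC_mul (f g : RatFunc ℝ) : evalC (f * g) =ᶠ[cofinite] fun s => evalC f s * evalC g s := by
  filter_upwards [eventually_not_isPoleAt f, eventually_not_isPoleAt g] with s hf hg
  exact RatFunc.eval_mul _ _ hf hg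

lemma evalC_add (f g : RatFunc ℝ) : evalC (f + g) =ᶠ[cofinite] fun s => evalC f s + evalC g s := by
  filter_upwards [eventually_not_isPoleAt f, eventually_not_isPoleAt g] with s hf hg
  exact RatFunc.eval_add _ _ hf hg

lemma evalC_inv (f : RatFunc ℝ) : evalC f⁻¹ =ᶠ[cofinite] fun s => (evalC f s)⁻¹ := by
  rcases eq_or_ne f 0 with rfl | hf
  · exact .of_eq (by simp [funext_iff, evalC])
  filter_upwards [evalC_mul f f⁻¹] with s hs
  rw [mul_inv_cancel₀ hf] at hs
  exact eq_inv_of_mul_eq_one_right (hs.symm.trans (RatFunc.eval_one _ _))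

lemma evalM_smul (f : RatFunc ℝ) (A : Matrix (Fin n) (Fin n) (RatFunc ℝ)) :
    evalM (f • A) =ᶠ[cofinite] fun s => evalC f s • evalM A s := by
  have hentries : ∀ᶠ s in cofinite, ∀ i j, evalC (f * A i j) s = evalC f s * evalC (A i j) s :=
    eventually_all.2 fun i => eventually_all.2 fun j => evalC_mul f (A i j)
  filter_upwards [hentries] with s hs
  exact Matrix.ext hs

lemma evalM_map_C (M : Matrix (Fin n) (Fin n) ℝ) (s : ℂ) :
    evalM (M.map RatFunc.C) s = M.map Complex.ofReal := by
  ext i j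
  simp [evalM, evalC]

lemma evalM_zero_eq_map_evalR (A : Matrix (Fin n) (Fin n) (RatFunc ℝ)) :
    evalM A 0 = (evalR A 0).map Complex.ofReal := by
  ext i j
  simp [evalM, evalR, evalC, RatFunc.eval, eval₂_at_zero]

lemma evalC_conj (f : RatFunc ℝ) (s : ℂ) : evalC f (star s) = star (evalC f s) := by
  simp [evalC, RatFunc.eval, ← aeval_def, aeval_conj]

lemma evalM_conj (A : Matrix (Fin n) (Fin n) (RatFunc ℝ)) (s : ℂ) :
    evalM A (star s) = (evalM A s).map star :=
  Matrix.ext fun i j => evalC_conj (A i j) s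

lemma hasPole_conj : HasPole A (star s) ↔ HasPole A s := by
  simp [HasPole, IsPoleAt, ← aeval_def, aeval_conj]

lemma differentiableAt_evalC (hf : ¬ IsPoleAt f s) : DifferentiableAt ℂ (evalC f) s := by
  have hpoly (p : ℝ[X]) : DifferentiableAt ℂ (fun s => p.eval₂ (algebraMap ℝ ℂ) s) s :=
    p.differentiable_aeval s
  exact (hpoly f.num).div (hpoly f.denom) hf

lemma continuousAt_evalM (hA : ¬ HasPole A s) : ContinuousAt (evalM A) s := by
  simp only [HasPole, not_exists] at hA
  exact continuousAt_pi.2 fun i => continuousAt_pi.2 fun j =>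
    (differentiableAt_evalC (hA i j)).continuousAt

lemma tendsto_evalM_nhdsNE (hA : ¬ HasPole A s) :
    Tendsto (evalM A) (𝓝[≠] s) (𝓝 (evalM A s)) :=
  (continuousAt_evalM hA).tendsto.mono_left nhdsWithin_le_nhds

lemma not_isPoleAt_of_isBigO_one [l.NeBot] (hl : l ≤ 𝓝[≠] s)
    (hf : evalC f =O[l] (1 : ℂ → ℝ)) : ¬ IsPoleAt f s := by
  intro hpole
  have hlim (p : ℝ[X]) : Tendsto (fun s => p.eval₂ (algebraMap ℝ ℂ) s) l
      (𝓝 (p.eval₂ (algebraMap ℝ ℂ) s)) :=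
    (p.continuous_aeval.tendsto s).mono_left (hl.trans nhdsWithin_le_nhds)
  have hdenom : Tendsto (fun s => f.denom.eval₂ (algebraMap ℝ ℂ) s) l (𝓝 0) := by
    have := hlim f.denom
    rwa [show f.denom.eval₂ (algebraMap ℝ ℂ) s = 0 from hpole] at this
  have hprod : Tendsto (fun s => f.denom.eval₂ (algebraMap ℝ ℂ) s * evalC f s) l (𝓝 0) :=
    hdenom.zero_mul_isBoundedUnder_le (Asymptotics.isBigO_one_iff ℝ |>.1 hf)
  have hnum : f.num.eval₂ (algebraMap ℝ ℂ) s = 0 := by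
    refine tendsto_nhds_unique (hlim f.num) (hprod.congr' ?_)
    filter_upwards [hl.trans (nhdsNE_le_cofinite s) (eventually_not_isPoleAt f)] with z hz
    exact mul_div_cancel₀ _ hz
  obtain ⟨a, b, hab⟩ := f.isCoprime_num_denom
  have := congrArg (eval₂ (algebraMap ℝ ℂ) s) hab
  rw [eval₂_add, eval₂_mul, eval₂_mul, hnum, show f.denom.eval₂ (algebraMap ℝ ℂ) s = 0 from hpole,
    eval₂_one] at this
  simp at this

lemma not_hasPole_of_tendsto {M : Matrix (Fin n) (Fin n) ℂ}
    (h : Tendsto (evalM A) (𝓝[≠] s) (𝓝 M)) : ¬ HasPole A s := by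
  rintro ⟨i, j, hij⟩
  exact not_isPoleAt_of_isBigO_one le_rfl
    (tendsto_pi_nhds.1 (tendsto_pi_nhds.1 h i) j |>.isBigO_one ℝ) hij

lemma evalM_eq_of_tendsto {M : Matrix (Fin n) (Fin n) ℂ}
    (h : Tendsto (evalM A) (𝓝[≠] s) (𝓝 M)) : evalM A s = M :=
  tendsto_nhds_unique (tendsto_evalM_nhdsNE (not_hasPole_of_tendsto h)) h

lemma tendsto_ofReal_atTop : Tendsto Complex.ofReal atTop (cocompact ℂ) :=
  Complex.isometry_ofReal.isClosedEmbedding.tendsto_cocompact.mono_left atTop_le_cocompact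

lemma tendsto_inv_cocompact : Tendsto (fun s : ℂ => s⁻¹) (cocompact ℂ) (𝓝 0) :=
  Metric.cobounded_eq_cocompact (α := ℂ) ▸ tendsto_inv₀_cobounded

lemma tendsto_eval₂_div_pow_cocompact {p : ℝ[X]} {k : ℕ} (hp : p.natDegree ≤ k) :
    Tendsto (fun s : ℂ => p.eval₂ (algebraMap ℝ ℂ) s / s ^ k) (cocompact ℂ) (𝓝 (p.coeff k)) := by
  have hreflect : Tendsto (fun s : ℂ => (p.reflect k).eval₂ (algebraMap ℝ ℂ) s⁻¹) (cocompact ℂ)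
      (𝓝 (p.coeff k)) := by
    have := ((p.reflect k).continuous_aeval (A := ℂ)).tendsto 0 |>.comp tendsto_inv_cocompact
    simpa [Function.comp_def, aeval_def, eval₂_at_zero, coeff_reflect, revAt_zero] using this
  refine hreflect.congr' ?_
  filter_upwards [cocompact_le_cofinite (eventually_cofinite_ne 0)] with s hs
  have := invertibleOfNonzero hs
  rw [eq_div_iff (pow_ne_zero k hs), ← invOf_eq_inv, eval₂_reflect_mul_pow _ _ _ _ hp]

lemma tendsto_evalC_cocompact (hf : f.num.degree ≤ f.denom.degree) :
    Tendsto (evalC f) (cocompact ℂ) (𝓝 (atInfinity f : ℂ)) := by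
  have hdenom : f.denom.coeff f.denom.natDegree ≠ 0 := by
    simpa using f.denom_ne_zero
  have hlim := (tendsto_eval₂_div_pow_cocompact (natDegree_le_natDegree hf)).div
    (tendsto_eval₂_div_pow_cocompact le_rfl) (Complex.ofReal_ne_zero.2 hdenom)
  have hvalue : f.num.coeff f.denom.natDegree / f.denom.coeff f.denom.natDegree = atInfinity f := by
    unfold atInfinity
    split_ifs with hdeg
    · simp only [leadingCoeff, natDegree_eq_of_degree_eq hdeg]
    · rw [coeff_eq_zero_of_degree_lt, zero_div]
      exact (lt_of_le_of_ne hf hdeg).trans_le degree_le_natDegree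
  rw [← hvalue, Complex.ofReal_div]
  refine hlim.congr' ?_
  filter_upwards [cocompact_le_cofinite (eventually_cofinite_ne 0)] with s hs
  exact div_div_div_cancel_right₀ (pow_ne_zero _ hs) _ _

lemma tendsto_evalM_cocompact (hA : Proper A) :
    Tendsto (evalM A) (cocompact ℂ) (𝓝 ((evalInf A).map Complex.ofReal)) :=
  tendsto_pi_nhds.2 fun i => tendsto_pi_nhds.2 fun j => tendsto_evalC_cocompact (hA i j)

lemma degree_num_le_degree_denom_of_isBigO_one (hf : evalC f =O[cocompact ℂ] (1 : ℂ → ℝ)) :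
    f.num.degree ≤ f.denom.degree := by
  by_contra! hdeg
  have hdenom := tendsto_eval₂_div_pow_cocompact (natDegree_le_natDegree hdeg.le)
  rw [coeff_eq_zero_of_degree_lt (hdeg.trans_le degree_le_natDegree), Complex.ofReal_zero] at hdenom
  have hnum : f.num.coeff f.num.natDegree = 0 := by
    refine Complex.ofReal_eq_zero.1 <| tendsto_nhds_unique
      (tendsto_eval₂_div_pow_cocompact le_rfl) ?_
    refine (hdenom.zero_mul_isBoundedUnder_le (Asymptotics.isBigO_one_iff ℝ |>.1 hf)).congr' ?_
    filter_upwards [cocompact_le_cofinite (eventually_not_isPoleAt f)] with s hs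
    rw [div_mul_eq_mul_div]
    exact congrArg (· / _) (mul_div_cancel₀ _ hs)
  rw [coeff_natDegree, leadingCoeff_eq_zero] at hnum
  simp [hnum] at hdeg

lemma proper_of_tendsto {M : Matrix (Fin n) (Fin n) ℂ}
    (h : Tendsto (evalM A) (cocompact ℂ) (𝓝 M)) : Proper A := fun i j =>
  degree_num_le_degree_denom_of_isBigO_one
    (tendsto_pi_nhds.1 (tendsto_pi_nhds.1 h i) j |>.isBigO_one ℝ)

lemma tendsto_evalM_add {M N : Matrix (Fin n) (Fin n) ℂ} (hl : l ≤ cofinite)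
    (hA : Tendsto (evalM A) l (𝓝 M)) (hB : Tendsto (evalM B) l (𝓝 N)) :
    Tendsto (evalM (A + B)) l (𝓝 (M + N)) :=
  (hA.add hB).congr' ((evalM_add A B).filter_mono hl).symm

lemma tendsto_evalM_mul {M N : Matrix (Fin n) (Fin n) ℂ} (hl : l ≤ cofinite)
    (hA : Tendsto (evalM A) l (𝓝 M)) (hB : Tendsto (evalM B) l (𝓝 N)) :
    Tendsto (evalM (A * B)) l (𝓝 (M * N)) :=
  (hA.mul hB).congr' ((evalM_mul A B).filter_mono hl).symm

end Evaluation

section ImaginaryAxis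

variable {ω : ℝ}

lemma jw_re (ω : ℝ) : (jw ω).re = 0 := by simp [jw]

lemma jw_im (ω : ℝ) : (jw ω).im = ω := by simp [jw]

lemma jw_ne_zero (hω : ω ≠ 0) : jw ω ≠ 0 := by simp [jw, hω]

lemma star_jw (ω : ℝ) : star (jw ω) = jw (-ω) := by simp [jw]

lemma eq_jw_im {s : ℂ} (hs : s.re = 0) : s = jw s.im :=
  Complex.ext (by rw [hs, jw_re]) (by rw [jw_im])

lemma isometry_jw : Isometry jw := by
  refine Isometry.of_dist_eq fun x y => ?_
  rw [dist_eq_norm, jw, jw, ← mul_sub, norm_mul, Complex.norm_I, one_mul, ← dist_eq_norm,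
    Complex.isometry_ofReal.dist_eq]

lemma tendsto_jw_nhdsNE (ω : ℝ) : Tendsto jw (𝓝[≠] ω) (𝓝[≠] jw ω) :=
  tendsto_nhdsWithin_of_tendsto_nhds_of_eventually_within _
    (isometry_jw.continuous.continuousAt.tendsto.mono_left nhdsWithin_le_nhds)
    (eventually_mem_nhdsWithin.mono fun _ => isometry_jw.injective.ne)

lemma tendsto_jw_atTop : Tendsto jw atTop (cocompact ℂ) :=
  isometry_jw.isClosedEmbedding.tendsto_cocompact.mono_left atTop_le_cocompact

end ImaginaryAxis

section QuadraticForms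

variable {M : Matrix (Fin n) (Fin n) ℂ} {A : Matrix (Fin n) (Fin n) ℝ} {y : Fin n → ℂ}

/-- The quadratic form `y* M y` of a complex matrix, not assumed Hermitian. -/
def quadForm (M : Matrix (Fin n) (Fin n) ℂ) (y : Fin n → ℂ) : ℂ := star y ⬝ᵥ M *ᵥ y

/-- The Euclidean norm of a complex vector; the norm that Mathlib puts on `Fin n → ℂ` is the
sup norm. -/
def euclNorm (y : Fin n → ℂ) : ℝ := ‖WithLp.toLp 2 y‖

lemma star_dotProduct_self_eq_euclNorm_sq (y : Fin n → ℂ) : star y ⬝ᵥ y = (euclNorm y ^ 2 : ℝ) := by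
  rw [dotProduct_comm, ← EuclideanSpace.inner_toLp_toLp, inner_self_eq_norm_sq_to_K, euclNorm]
  norm_cast

lemma euclNorm_nonneg (y : Fin n → ℂ) : 0 ≤ euclNorm y := norm_nonneg _

lemma euclNorm_pos (hy : y ≠ 0) : 0 < euclNorm y := by
  simpa [euclNorm] using hy

lemma euclNorm_smul (c : ℂ) (y : Fin n → ℂ) : euclNorm (c • y) = ‖c‖ * euclNorm y :=
  norm_smul c (WithLp.toLp 2 y)

lemma euclNorm_sub_le (y z : Fin n → ℂ) : euclNorm (y - z) ≤ euclNorm y + euclNorm z :=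
  norm_sub_le (WithLp.toLp 2 y) (WithLp.toLp 2 z)

lemma norm_star_dotProduct_le (y z : Fin n → ℂ) : ‖star y ⬝ᵥ z‖ ≤ euclNorm y * euclNorm z := by
  rw [dotProduct_comm, ← EuclideanSpace.inner_toLp_toLp]
  exact norm_inner_le_norm _ _

lemma norm_apply_le_euclNorm (y : Fin n → ℂ) (i : Fin n) : ‖y i‖ ≤ euclNorm y :=
  PiLp.norm_apply_le (WithLp.toLp 2 y) i

lemma quadForm_add (M N : Matrix (Fin n) (Fin n) ℂ) (y : Fin n → ℂ) :
    quadForm (M + N) y = quadForm M y + quadForm N y := by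
  rw [quadForm, add_mulVec, dotProduct_add, ← quadForm, ← quadForm]

lemma quadForm_sub (M N : Matrix (Fin n) (Fin n) ℂ) (y : Fin n → ℂ) :
    quadForm (M - N) y = quadForm M y - quadForm N y := by
  rw [quadForm, sub_mulVec, dotProduct_sub, ← quadForm, ← quadForm]

lemma quadForm_smul (c : ℂ) (M : Matrix (Fin n) (Fin n) ℂ) (y : Fin n → ℂ) :
    quadForm (c • M) y = c * quadForm M y := by
  rw [quadForm, smul_mulVec, dotProduct_smul, ← quadForm, smul_eq_mul]

lemma quadForm_one (y : Fin n → ℂ) : quadForm 1 y = (euclNorm y ^ 2 : ℝ) := by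
  rw [quadForm, one_mulVec, star_dotProduct_self_eq_euclNorm_sq]

lemma quadForm_conjTranspose (M : Matrix (Fin n) (Fin n) ℂ) (y : Fin n → ℂ) :
    quadForm Mᴴ y = star (quadForm M y) := by
  rw [quadForm, dotProduct_mulVec, ← star_mulVec, star_dotProduct, quadForm]

lemma quadForm_map_star (M : Matrix (Fin n) (Fin n) ℂ) (y : Fin n → ℂ) :
    quadForm (M.map star) y = star (quadForm M (star y)) := by
  simp only [quadForm, mulVec, dotProduct, Matrix.map_apply, star_sum, star_mul', star_star,
    Pi.star_apply]

lemma quadForm_smul_vec (c : ℂ) (M : Matrix (Fin n) (Fin n) ℂ) (y : Fin n → ℂ) :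
    quadForm M (c • y) = (‖c‖ ^ 2 : ℝ) * quadForm M y := by
  simp only [quadForm, star_smul, mulVec_smul, smul_dotProduct, dotProduct_smul, smul_eq_mul]
  rw [← mul_assoc, Complex.star_def, Complex.mul_conj', Complex.ofReal_pow]

lemma continuous_quadForm :
    Continuous fun p : Matrix (Fin n) (Fin n) ℂ × (Fin n → ℂ) => quadForm p.1 p.2 := by
  unfold quadForm
  fun_prop

open scoped Matrix.Norms.L2Operator in
lemma euclNorm_mulVec_le (M : Matrix (Fin n) (Fin n) ℂ) (y : Fin n → ℂ) :
    euclNorm (M *ᵥ y) ≤ ‖M‖ * euclNorm y :=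
  l2_opNorm_mulVec M (WithLp.toLp 2 y)

open scoped Matrix.Norms.L2Operator in
lemma norm_quadForm_le (M : Matrix (Fin n) (Fin n) ℂ) (y : Fin n → ℂ) :
    ‖quadForm M y‖ ≤ ‖M‖ * euclNorm y ^ 2 :=
  calc ‖quadForm M y‖
    _ ≤ euclNorm y * euclNorm (M *ᵥ y) := norm_star_dotProduct_le y (M *ᵥ y)
    _ ≤ euclNorm y * (‖M‖ * euclNorm y) := by
      gcongr
      exacts [euclNorm_nonneg y, euclNorm_mulVec_le M y]
    _ = ‖M‖ * euclNorm y ^ 2 := by ring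

lemma im_quadForm_eq_zero (hM : M.IsHermitian) (y : Fin n → ℂ) : (quadForm M y).im = 0 := by
  rw [← Complex.conj_eq_iff_im, ← Complex.star_def, ← quadForm_conjTranspose, hM]

lemma posSemidef_of_re_quadForm_nonneg (hM : M.IsHermitian) (h : ∀ y, 0 ≤ (quadForm M y).re) :
    M.PosSemidef :=
  .of_dotProduct_mulVec_nonneg hM fun y =>
    Complex.nonneg_iff.2 ⟨h y, (im_quadForm_eq_zero hM y).symm⟩

lemma re_quadForm_nonneg (hM : M.PosSemidef) (y : Fin n → ℂ) : 0 ≤ (quadForm M y).re :=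
  hM.re_dotProduct_nonneg y

lemma isHermitian_niKer (M : Matrix (Fin n) (Fin n) ℂ) : (niKer M).IsHermitian := by
  rw [niKer, IsHermitian, conjTranspose_smul, conjTranspose_sub, conjTranspose_conjTranspose,
    Complex.star_def, Complex.conj_I, neg_smul, ← smul_neg, neg_sub]

lemma quadForm_niKer (M : Matrix (Fin n) (Fin n) ℂ) (y : Fin n → ℂ) :
    quadForm (niKer M) y = (-2 * (quadForm M y).im : ℝ) := by
  rw [niKer, quadForm_smul, quadForm_sub, quadForm_conjTranspose, Complex.star_def,
    Complex.sub_conj, mul_left_comm, Complex.I_mul_I]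
  push_cast
  ring

lemma posSemidef_niKer_iff :
    (niKer M).PosSemidef ↔ ∀ y, (quadForm M y).im ≤ 0 := by
  rw [posSemidef_iff_dotProduct_mulVec, and_iff_right (isHermitian_niKer M)]
  refine forall_congr' fun y => ?_
  rw [← quadForm, quadForm_niKer, Complex.zero_le_real]
  constructor <;> intro h <;> linarith

lemma posDef_niKer_iff :
    (niKer M).PosDef ↔ ∀ y, y ≠ 0 → (quadForm M y).im < 0 := by
  rw [posDef_iff_dotProduct_mulVec, and_iff_right (isHermitian_niKer M)]
  refine forall₂_congr fun y _ => ?_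
  rw [← quadForm, quadForm_niKer, Complex.zero_lt_real]
  constructor <;> intro h <;> linarith

lemma re_quadForm_map_ofReal (A : Matrix (Fin n) (Fin n) ℝ) (y : Fin n → ℂ) :
    (quadForm (A.map Complex.ofReal) y).re =
      (Complex.re ∘ y) ⬝ᵥ A *ᵥ (Complex.re ∘ y) + (Complex.im ∘ y) ⬝ᵥ A *ᵥ (Complex.im ∘ y) := by
  simp [quadForm, dotProduct, mulVec, Finset.sum_add_distrib]

lemma isHermitian_map_ofReal (hA : A.IsHermitian) : (A.map Complex.ofReal).IsHermitian :=
  hA.map _ fun x => (Complex.conj_ofReal x).symm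

lemma posSemidef_map_ofReal (hA : A.PosSemidef) : (A.map Complex.ofReal).PosSemidef := by
  refine posSemidef_of_re_quadForm_nonneg (isHermitian_map_ofReal hA.1) fun y => ?_
  rw [re_quadForm_map_ofReal]
  exact add_nonneg (hA.dotProduct_mulVec_nonneg _) (hA.dotProduct_mulVec_nonneg _)

lemma re_quadForm_map_ofReal_pos (hA : A.PosDef) (hy : y ≠ 0) :
    0 < (quadForm (A.map Complex.ofReal) y).re := by
  have hnonneg (x : Fin n → ℝ) : 0 ≤ x ⬝ᵥ A *ᵥ x := hA.posSemidef.dotProduct_mulVec_nonneg x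
  have hpos {x : Fin n → ℝ} (hx : x ≠ 0) : 0 < x ⬝ᵥ A *ᵥ x := hA.dotProduct_mulVec_pos hx
  rw [re_quadForm_map_ofReal]
  by_cases hre : Complex.re ∘ y = 0
  · have him : Complex.im ∘ y ≠ 0 := fun him =>
      hy (funext fun i => Complex.ext (congrFun hre i) (congrFun him i))
    exact add_pos_of_nonneg_of_pos (hnonneg _) (hpos him)
  · exact add_pos_of_pos_of_nonneg (hpos hre) (hnonneg _)

lemma isHermitian_of_posSemidef_niKer_map_ofReal
    (hA : (niKer (A.map Complex.ofReal)).PosSemidef) : A.IsHermitian := by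
  have hconj : (A.map Complex.ofReal)ᴴ = Aᵀ.map Complex.ofReal := by
    ext i j
    simp
  have htrace : (niKer (A.map Complex.ofReal)).trace = 0 := by
    rw [niKer, hconj, ← Matrix.map_sub _ Complex.ofReal_sub, trace_smul]
    simp [trace]
  have hzero := hA.trace_eq_zero_iff.1 htrace
  rw [niKer, smul_eq_zero_iff_right Complex.I_ne_zero, sub_eq_zero, hconj] at hzero
  exact (Matrix.map_injective Complex.ofReal_injective hzero).symm

end QuadraticForms

section HalfPlane

variable {f : ℂ → ℂ} {c : ℝ} {s : ℂ} {S : Set ℂ}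

lemma eventually_norm_le_of_tendsto_div (hc : 0 ≤ c)
    (hlim : Tendsto (fun s => f s / s) (cocompact ℂ) (𝓝 c)) :
    ∀ᶠ s in cocompact ℂ, ‖f s‖ ≤ (c + 1) * ‖s‖ := by
  have hlt : ∀ᶠ s in cocompact ℂ, ‖f s / s‖ < c + 1 :=
    hlim.norm.eventually_lt_const (by simp [abs_of_nonneg hc])
  filter_upwards [hlt, cocompact_le_cofinite (eventually_cofinite_ne 0)] with s h hs
  rw [norm_div, div_lt_iff₀ (norm_pos_iff.2 hs)] at h
  exact h.le

lemma eventually_neg_mul_le_re_of_tendsto_div (hc : 0 ≤ c)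
    (hlim : Tendsto (fun s => f s / s) (cocompact ℂ) (𝓝 c)) {ε : ℝ} (hε : 0 < ε) :
    ∀ᶠ x : ℝ in atTop, -(ε * x) ≤ (f x).re := by
  have hre := (Complex.continuous_re.tendsto _).comp (hlim.comp tendsto_ofReal_atTop)
  have hlt : -ε < (c : ℂ).re := by
    rw [Complex.ofReal_re]
    linarith
  filter_upwards [hre.eventually_const_lt hlt, eventually_gt_atTop 0] with x h hx
  rw [Function.comp_apply, Function.comp_apply, Complex.div_ofReal_re, lt_div_iff₀ hx] at h
  linarith

-- Phragmén–Lindelöf applied to `exp (-(f s + ε s))`, followed by `ε → 0`.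
lemma re_nonneg_of_boundary (hf : DiffContOnCl ℂ f {s | 0 < s.re}) (hc : 0 ≤ c)
    (hlim : Tendsto (fun s => f s / s) (cocompact ℂ) (𝓝 c))
    (haxis : ∀ ω : ℝ, 0 ≤ (f (jw ω)).re) (hs : 0 ≤ s.re) : 0 ≤ (f s).re := by
  suffices h : ∀ ε > 0, 0 ≤ (f s).re + ε * s.re by
    refine ge_of_tendsto (f := fun ε => (f s).re + ε * s.re) (x := 𝓝[>] 0) ?_
      (eventually_mem_nhdsWithin.mono h)
    exact tendsto_nhdsWithin_of_tendsto_nhds (Continuous.tendsto' (by fun_prop) _ _ (by simp))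
  intro ε hε
  have hnorm (z : ℂ) : ‖Complex.exp (-(f z + ε * z))‖ = Real.exp (-((f z).re + ε * z.re)) := by
    simp [Complex.norm_exp]
  suffices hle : ‖Complex.exp (-(f s + ε * s))‖ ≤ 1 by
    rw [hnorm, Real.exp_le_one_iff] at hle
    linarith
  refine PhragmenLindelof.right_half_plane_of_bounded_on_real
    (f := fun z => Complex.exp (-(f z + ε * z))) ?_ ⟨1, one_lt_two, c + 1 + ε, ?_⟩ ?_ ?_ hs
  · exact Complex.differentiable_exp.comp_diffContOnCl
      (hf.add (by fun_prop : Differentiable ℂ fun z : ℂ => ε * z).diffContOnCl).neg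
  · rw [Metric.cobounded_eq_cocompact]
    refine .of_bound' (Eventually.filter_mono inf_le_left ?_)
    filter_upwards [eventually_norm_le_of_tendsto_div hc hlim] with z hz
    rw [hnorm, Real.norm_eq_abs, Real.abs_exp, Real.exp_le_exp, Real.rpow_one, add_mul]
    have := mul_le_mul_of_nonneg_left (neg_le_of_abs_le z.abs_re_le_norm) hε.le
    linarith [neg_le_of_abs_le (f z).abs_re_le_norm]
  · refine isBoundedUnder_of_eventually_le (a := 1) ?_
    filter_upwards [eventually_neg_mul_le_re_of_tendsto_div hc hlim hε] with x hx
    rw [hnorm, Real.exp_le_one_iff, Complex.ofReal_re]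
    linarith
  · intro ω
    rw [hnorm, Real.exp_le_one_iff, mul_comm _ Complex.I, ← jw, jw_re]
    linarith [haxis ω]

lemma re_pos_of_boundary (hf : DiffContOnCl ℂ f {s | 0 < s.re})
    (hnonneg : ∀ s, 0 ≤ s.re → 0 ≤ (f s).re) {ω : ℝ} (hω : 0 < (f (jw ω)).re) (hs : 0 < s.re) :
    0 < (f s).re := by
  by_contra! hle
  have hnorm (z : ℂ) : ‖Complex.exp ((-f) z)‖ = Real.exp (-(f z).re) := by
    simp [Complex.norm_exp]
  have hmax : IsMaxOn (norm ∘ Complex.exp ∘ (-f)) {s | 0 < s.re} s := fun z hz => by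
    have := hnonneg z (le_of_lt hz)
    simp only [Set.mem_ofPred_eq, Function.comp_apply, hnorm, Real.exp_le_exp]
    linarith
  have hconst := Complex.norm_eqOn_closure_of_isPreconnected_of_isMaxOn
    (convex_halfSpace_re_gt 0).isPreconnected (isOpen_lt continuous_const Complex.continuous_re)
    (Complex.differentiable_exp.comp_diffContOnCl hf.neg) hs hmax
  have hmem : jw ω ∈ closure {s : ℂ | 0 < s.re} := by
    rw [Complex.closure_setOfPred_lt_re]
    exact (jw_re ω).ge
  have heq := hconst hmem
  simp only [Function.comp_apply, Function.const_apply, hnorm, Real.exp_eq_exp] at heq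
  linarith

lemma exists_tendsto_of_tendsto_sub_mul {p : ℂ} (hf : ∀ᶠ s in 𝓝[≠] p, DifferentiableAt ℂ f s)
    (hlim : Tendsto (fun s => (s - p) * f s) (𝓝[≠] p) (𝓝 0)) :
    ∃ v, Tendsto f (𝓝[≠] p) (𝓝 v) := by
  refine ⟨_, Complex.tendsto_limUnder_of_differentiable_on_punctured_nhds_of_isLittleO hf ?_⟩
  have hne : ∀ᶠ s in 𝓝[≠] p, s - p ≠ 0 :=
    eventually_mem_nhdsWithin.mono fun s hs => sub_ne_zero.2 hs
  rw [Asymptotics.isLittleO_iff_tendsto' (hne.mono fun s hs h => absurd h (inv_ne_zero hs))]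
  have hsub : Tendsto (fun s => (s - p) * f p) (𝓝[≠] p) (𝓝 0) :=
    tendsto_nhdsWithin_of_tendsto_nhds (Continuous.tendsto' (by fun_prop) _ _ (by simp))
  refine (by simpa using hlim.sub hsub : Tendsto _ _ _).congr fun s => ?_
  rw [div_inv_eq_mul]
  ring

lemma re_nonneg_of_boundary_of_removable (hS : S.Finite) (hSre : ∀ p ∈ S, p.re ≤ 0)
    (hf : ∀ s ∉ S, DifferentiableAt ℂ f s)
    (hremovable : ∀ p ∈ S, p.re = 0 → ∃ v, Tendsto f (𝓝[≠] p) (𝓝 v))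
    (hc : 0 ≤ c) (hlim : Tendsto (fun s => f s / s) (cocompact ℂ) (𝓝 c))
    (haxis : ∀ ω : ℝ, jw ω ∉ S → 0 ≤ (f (jw ω)).re) (hs : 0 < s.re) : 0 ≤ (f s).re := by
  have hdense (x : ℂ) : x ∈ closure Sᶜ := by
    rw [Set.compl_eq_univ_sdiff]
    exact dense_univ.sdiff_finite hS x
  have hext : ∀ x ∉ S, extendFrom Sᶜ f x = f x := fun x hx =>
    extendFrom_eq (hdense x) (hf x hx).continuousAt.continuousWithinAt
  have hcont : ContinuousOn (extendFrom Sᶜ f) {s | 0 ≤ s.re} := by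
    refine continuousOn_extendFrom (fun x _ => hdense x) fun x hx => ?_
    by_cases hxS : x ∈ S
    · obtain ⟨v, hv⟩ := hremovable x hxS ((hSre x hxS).antisymm hx)
      exact ⟨v, hv.mono_left (nhdsWithin_mono _ fun z hz hzx => hz (by rwa [hzx]))⟩
    · exact ⟨f x, (hf x hxS).continuousAt.continuousWithinAt⟩
  have hdiff : DiffContOnCl ℂ (extendFrom Sᶜ f) {s | 0 < s.re} := by
    refine ⟨fun x hx => ?_, by rwa [Complex.closure_setOfPred_lt_re]⟩
    have hxS : x ∉ S := fun hxS => hx.not_ge (hSre x hxS)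
    refine ((hf x hxS).congr_of_eventuallyEq ?_).differentiableWithinAt
    filter_upwards [(isOpen_lt continuous_const Complex.continuous_re).mem_nhds hx] with z hz
    exact hext z fun hzS => hz.not_ge (hSre z hzS)
  rw [← hext s fun hsS => hs.not_ge (hSre s hsS)]
  refine re_nonneg_of_boundary hdiff hc (hlim.congr' ?_) (fun ω => ?_) hs.le
  · filter_upwards [cocompact_le_cofinite hS.compl_mem_cofinite] with z hz
    rw [hext z hz]
  · have hcontω : Continuous fun ω => (extendFrom Sᶜ f (jw ω)).re :=
      Complex.continuous_re.comp
        (hcont.comp_continuous isometry_jw.continuous fun ω => (jw_re ω).ge)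
    refine ge_of_tendsto (x := 𝓝[≠] ω) (hcontω.continuousAt.tendsto.mono_left nhdsWithin_le_nhds) ?_
    filter_upwards [(tendsto_jw_nhdsNE ω).eventually
      (nhdsNE_le_cofinite _ hS.compl_mem_cofinite)] with ω' hω'
    rw [hext _ hω']
    exact haxis ω' hω'

/-- The sum of the simple fractions `r p / (s - p)`, `p ∈ T`: the principal parts of a function
with simple poles in `T` and residues `r`. -/
def polarPart (T : Finset ℂ) (r : ℂ → ℝ) (s : ℂ) : ℂ := ∑ p ∈ T, (r p : ℂ) / (s - p)

section PolarPart

variable {T : Finset ℂ} {r : ℂ → ℝ}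

lemma differentiableAt_polarPart (r : ℂ → ℝ) (hs : s ∉ T) :
    DifferentiableAt ℂ (polarPart T r) s :=
  .fun_sum fun _ hp => (differentiableAt_const _).div (by fun_prop)
    (sub_ne_zero.2 fun h => hs (h ▸ hp))

lemma re_polarPart_nonneg (hT : ∀ p ∈ T, p.re = 0) (hr : ∀ p ∈ T, 0 ≤ r p) (hs : 0 ≤ s.re) :
    0 ≤ (polarPart T r s).re := by
  rw [polarPart, Complex.re_sum]
  refine Finset.sum_nonneg fun p hp => ?_
  have hre : ((r p : ℂ) / (s - p)).re = r p * s.re / Complex.normSq (s - p) := by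
    simp [Complex.div_re, hT p hp]
  rw [hre]
  exact div_nonneg (mul_nonneg (hr p hp) hs) (Complex.normSq_nonneg _)

lemma re_polarPart_jw (hT : ∀ p ∈ T, p.re = 0) (r : ℂ → ℝ) (ω : ℝ) :
    (polarPart T r (jw ω)).re = 0 := by
  rw [polarPart, Complex.re_sum]
  exact Finset.sum_eq_zero fun p hp => by simp [Complex.div_re, jw_re, hT p hp]

lemma tendsto_sub_mul_polarPart {p : ℂ} (hp : p ∈ T) (r : ℂ → ℝ) :
    Tendsto (fun s => (s - p) * polarPart T r s) (𝓝[≠] p) (𝓝 (r p)) := by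
  have hterm : ∀ q ∈ T, Tendsto (fun s => (s - p) * ((r q : ℂ) / (s - q))) (𝓝[≠] p)
      (𝓝 (if q = p then (r p : ℂ) else 0)) := by
    intro q _
    split_ifs with hqp
    · subst hqp
      refine tendsto_const_nhds.congr' ?_
      filter_upwards [eventually_mem_nhdsWithin] with s hs
      rw [mul_div_cancel₀ _ (sub_ne_zero.2 hs)]
    · have hne : p - q ≠ 0 := sub_ne_zero.2 (Ne.symm hqp)
      have hcont : ContinuousAt (fun s => (s - p) * ((r q : ℂ) / (s - q))) p := by
        fun_prop (disch := assumption)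
      simpa using hcont.tendsto.mono_left nhdsWithin_le_nhds
  simpa [polarPart, Finset.mul_sum, hp] using tendsto_finsetSum T hterm

lemma tendsto_polarPart_div_cocompact (T : Finset ℂ) (r : ℂ → ℝ) :
    Tendsto (fun s => polarPart T r s / s) (cocompact ℂ) (𝓝 0) := by
  have hterm : ∀ p ∈ T, Tendsto (fun s => (r p : ℂ) / (s - p)) (cocompact ℂ) (𝓝 0) := fun p _ => by
    simpa [div_eq_mul_inv] using
      (tendsto_inv_cocompact.comp
        (Homeomorph.subRight p).isClosedEmbedding.tendsto_cocompact).const_mul (r p : ℂ)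
  simpa [polarPart, div_eq_mul_inv] using
    (tendsto_finsetSum T hterm).mul tendsto_inv_cocompact

end PolarPart

lemma re_nonneg_of_boundary_of_residues (hS : S.Finite) (hSre : ∀ p ∈ S, p.re ≤ 0)
    (hf : ∀ s ∉ S, DifferentiableAt ℂ f s)
    (hresidue : ∀ p ∈ S, p.re = 0 →
      ∃ r : ℝ, 0 ≤ r ∧ Tendsto (fun s => (s - p) * f s) (𝓝[≠] p) (𝓝 r))
    (hc : 0 ≤ c) (hlim : Tendsto (fun s => f s / s) (cocompact ℂ) (𝓝 c))
    (haxis : ∀ ω : ℝ, jw ω ∉ S → 0 ≤ (f (jw ω)).re) (hs : 0 < s.re) : 0 ≤ (f s).re := by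
  choose! r hr hrlim using hresidue
  set T : Finset ℂ := hS.toFinset.filter (·.re = 0) with hT
  have hmemT {p : ℂ} : p ∈ T ↔ p ∈ S ∧ p.re = 0 := by simp [hT]
  have hTre : ∀ p ∈ T, p.re = 0 := fun p hp => (hmemT.1 hp).2
  have hdiff : ∀ z ∉ S, DifferentiableAt ℂ (f - polarPart T r) z := fun z hz =>
    (hf z hz).sub (differentiableAt_polarPart r fun hzT => hz (hmemT.1 hzT).1)
  have hremovable : ∀ p ∈ S, p.re = 0 → ∃ v, Tendsto (f - polarPart T r) (𝓝[≠] p) (𝓝 v) := by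
    intro p hpS hp0
    refine exists_tendsto_of_tendsto_sub_mul
      (Eventually.mono (nhdsNE_le_cofinite p hS.compl_mem_cofinite) hdiff) ?_
    simpa [mul_sub] using (hrlim p hpS hp0).sub (tendsto_sub_mul_polarPart (hmemT.2 ⟨hpS, hp0⟩) r)
  have hregular : 0 ≤ ((f - polarPart T r) s).re := by
    refine re_nonneg_of_boundary_of_removable hS hSre hdiff hremovable hc ?_ (fun ω hω => ?_) hs
    · simpa [sub_div] using hlim.sub (tendsto_polarPart_div_cocompact T r)
    · simpa [re_polarPart_jw hTre] using haxis ω hω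
  have hpolar := re_polarPart_nonneg hTre (fun p hp => hr p (hmemT.1 hp).1 (hmemT.1 hp).2) hs.le
  rw [Pi.sub_apply, Complex.sub_re] at hregular
  linarith

end HalfPlane

section NegativeImaginary

variable {P Q : Matrix (Fin n) (Fin n) (RatFunc ℝ)} {y : Fin n → ℂ} {q : ℝ} {s : ℂ} {ω : ℝ}

lemma tendsto_quadForm {α : Type*} {l : Filter α} {M : α → Matrix (Fin n) (Fin n) ℂ}
    {M₀ : Matrix (Fin n) (Fin n) ℂ} (hM : Tendsto M l (𝓝 M₀)) (y : Fin n → ℂ) :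
    Tendsto (fun a => quadForm (M a) y) l (𝓝 (quadForm M₀ y)) :=
  have hcont : Continuous fun M => quadForm M y :=
    continuous_quadForm.comp (continuous_id.prodMk continuous_const)
  (hcont.tendsto M₀).comp hM

lemma differentiableAt_quadForm_evalM (hP : ¬ HasPole P s) (y : Fin n → ℂ) :
    DifferentiableAt ℂ (fun s => quadForm (evalM P s) y) s := by
  simp only [HasPole, not_exists] at hP
  simp only [quadForm, dotProduct, mulVec]
  exact .fun_sum fun i _ => .const_mul
    (.fun_sum fun j _ => (differentiableAt_evalC (hP i j)).mul_const _) _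

lemma posSemidef_niKer_of_tendsto {α : Type*} {l : Filter α} [l.NeBot]
    {M : α → Matrix (Fin n) (Fin n) ℂ} {M₀ : Matrix (Fin n) (Fin n) ℂ}
    (hM : Tendsto M l (𝓝 M₀)) (h : ∀ᶠ a in l, (niKer (M a)).PosSemidef) :
    (niKer M₀).PosSemidef :=
  posSemidef_niKer_iff.2 fun y => le_of_tendsto
    ((Complex.continuous_im.tendsto _).comp (tendsto_quadForm hM y))
    (h.mono fun _ ha => posSemidef_niKer_iff.1 ha y)

lemma hasPole_finite (P : Matrix (Fin n) (Fin n) (RatFunc ℝ)) : {s | HasPole P s}.Finite :=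
  (eventually_not_hasPole P).subset fun _ hs => not_not_intro hs

lemma isNI_of_eventually (hproper : Proper P) (hrhp : ∀ s : ℂ, 0 < s.re → ¬ HasPole P s)
    (h0 : ¬ HasPole P 0)
    (haxis : ∀ᶠ s in cofinite, s.re = 0 → 0 < s.im → (niKer (evalM P s)).PosSemidef)
    (hresidue : ∀ ω : ℝ, 0 < ω → ∃ R : Matrix (Fin n) (Fin n) ℂ, R.PosSemidef ∧
      Tendsto (fun s : ℂ => (s - jw ω) • Complex.I • evalM P s) (𝓝[≠] jw ω) (𝓝 R)) :
    IsNI P := by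
  refine ⟨hproper, hrhp, fun ω hω hpole => ?_, fun ω hω _ => hresidue ω hω, fun h => absurd h h0⟩
  refine posSemidef_niKer_of_tendsto
    ((tendsto_evalM_nhdsNE hpole).comp (tendsto_jw_nhdsNE ω)) ?_
  filter_upwards [(tendsto_jw_nhdsNE ω).eventually (nhdsNE_le_cofinite _ haxis),
    nhdsWithin_le_nhds (eventually_gt_nhds hω)] with w hw hpos
  exact hw (jw_re w) (by rwa [jw_im])

lemma IsNI.eventually_posSemidef_niKer (hP : IsNI P) :
    ∀ᶠ s in cofinite, s.re = 0 → 0 < s.im → (niKer (evalM P s)).PosSemidef := by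
  filter_upwards [eventually_not_hasPole P] with s hs hre him
  rw [eq_jw_im hre] at hs ⊢
  exact hP.2.2.1 s.im him hs

lemma tendsto_sub_smul_evalM_of_not_hasPole (hP : ¬ HasPole P (jw ω)) :
    Tendsto (fun s : ℂ => (s - jw ω) • Complex.I • evalM P s) (𝓝[≠] jw ω) (𝓝 0) := by
  have hsub : Tendsto (fun s => s - jw ω) (𝓝[≠] jw ω) (𝓝 0) :=
    tendsto_nhdsWithin_of_tendsto_nhds (Continuous.tendsto' (by fun_prop) _ _ (sub_self _))
  simpa using hsub.smul ((tendsto_evalM_nhdsNE hP).const_smul Complex.I)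

lemma IsNI.exists_residue (hP : IsNI P) (hω : 0 < ω) :
    ∃ R : Matrix (Fin n) (Fin n) ℂ, R.PosSemidef ∧
      Tendsto (fun s : ℂ => (s - jw ω) • Complex.I • evalM P s) (𝓝[≠] jw ω) (𝓝 R) := by
  by_cases hpole : HasPole P (jw ω)
  · exact hP.2.2.2.1 ω hω hpole
  · exact ⟨0, .zero, tendsto_sub_smul_evalM_of_not_hasPole hpole⟩

lemma not_hasPole_add (hP : ¬ HasPole P s) (hQ : ¬ HasPole Q s) : ¬ HasPole (P + Q) s :=
  not_hasPole_of_tendsto (tendsto_evalM_add (nhdsNE_le_cofinite s) (tendsto_evalM_nhdsNE hP)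
    (tendsto_evalM_nhdsNE hQ))

lemma evalM_add_of_not_hasPole (hP : ¬ HasPole P s) (hQ : ¬ HasPole Q s) :
    evalM (P + Q) s = evalM P s + evalM Q s :=
  evalM_eq_of_tendsto (tendsto_evalM_add (nhdsNE_le_cofinite s) (tendsto_evalM_nhdsNE hP)
    (tendsto_evalM_nhdsNE hQ))

lemma IsNI.add (hP : IsNI P) (hQ : IsNI Q) (hP0 : ¬ HasPole P 0) (hQ0 : ¬ HasPole Q 0) :
    IsNI (P + Q) := by
  refine isNI_of_eventually ?_ (fun s hs => not_hasPole_add (hP.2.1 s hs) (hQ.2.1 s hs))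
    (not_hasPole_add hP0 hQ0) ?_ fun ω hω => ?_
  · exact proper_of_tendsto (tendsto_evalM_add cocompact_le_cofinite
      (tendsto_evalM_cocompact hP.1) (tendsto_evalM_cocompact hQ.1))
  · filter_upwards [hP.eventually_posSemidef_niKer, hQ.eventually_posSemidef_niKer,
      evalM_add P Q] with s hPs hQs hadd hre him
    rw [posSemidef_niKer_iff] at hPs hQs ⊢
    intro y
    rw [hadd, quadForm_add, Complex.add_im]
    exact add_nonpos (hPs hre him y) (hQs hre him y)
  · obtain ⟨R, hR, hRlim⟩ := hP.exists_residue hω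
    obtain ⟨R', hR', hRlim'⟩ := hQ.exists_residue hω
    refine ⟨R + R', hR.add hR', (hRlim.add hRlim').congr' ?_⟩
    filter_upwards [nhdsNE_le_cofinite _ (evalM_add P Q)] with s hs
    rw [hs, smul_add, smul_add]

lemma IsSNI.isNI (hP : IsSNI P) : IsNI P := by
  have hpole : ∀ s : ℂ, 0 ≤ s.re → ¬ HasPole P s := fun s hs ⟨i, j, hij⟩ => hP.1.2 s hs i j hij
  exact ⟨hP.1.1, fun s hs => hpole s hs.le, fun ω hω _ => (hP.2 ω hω).posSemidef,
    fun ω _ h => absurd h (hpole _ (jw_re ω).ge), fun h => absurd h (hpole 0 le_rfl)⟩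

lemma IsNI.isHermitian_evalR_zero (hP : IsNI P) (h0 : ¬ HasPole P 0) :
    (evalR P 0).IsHermitian := by
  refine isHermitian_of_posSemidef_niKer_map_ofReal ?_
  have hjw : Tendsto jw (𝓝[>] 0) (𝓝[≠] 0) := by
    simpa [jw] using (tendsto_jw_nhdsNE 0).mono_left (nhdsGT_le_nhdsNE 0)
  rw [← evalM_zero_eq_map_evalR]
  refine posSemidef_niKer_of_tendsto ((tendsto_evalM_nhdsNE h0).comp hjw) ?_
  filter_upwards [hjw.eventually (nhdsNE_le_cofinite _ hP.eventually_posSemidef_niKer),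
    eventually_mem_nhdsWithin] with ω h hω
  exact h (jw_re ω) (by rwa [jw_im])

lemma IsNI.isHermitian_evalInf (hP : IsNI P) : (evalInf P).IsHermitian := by
  refine isHermitian_of_posSemidef_niKer_map_ofReal ?_
  refine posSemidef_niKer_of_tendsto ((tendsto_evalM_cocompact hP.1).comp tendsto_jw_atTop) ?_
  filter_upwards [tendsto_jw_atTop.eventually
    (cocompact_le_cofinite hP.eventually_posSemidef_niKer), eventually_gt_atTop 0] with ω h hω
  exact h (jw_re ω) (by rwa [jw_im])

/-- The scalar function `(q - y* P(s) y) / s`, which has nonnegative real part on the right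
half-plane when `P` is negative imaginary and `y* P(0) y ≤ q`. -/
def staticGap (q : ℝ) (P : Matrix (Fin n) (Fin n) (RatFunc ℝ)) (y : Fin n → ℂ) (s : ℂ) : ℂ :=
  (q - quadForm (evalM P s) y) / s

lemma staticGap_conj (q : ℝ) (P : Matrix (Fin n) (Fin n) (RatFunc ℝ)) (y : Fin n → ℂ) (s : ℂ) :
    staticGap q P y (star s) = star (staticGap q P (star y) s) := by
  rw [staticGap, staticGap, evalM_conj, quadForm_map_star]
  simp

lemma re_staticGap_jw (q : ℝ) (P : Matrix (Fin n) (Fin n) (RatFunc ℝ)) (y : Fin n → ℂ) (ω : ℝ) :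
    (staticGap q P y (jw ω)).re = -(quadForm (evalM P (jw ω)) y).im / ω := by
  rw [staticGap, Complex.div_re, jw_re, jw_im]
  by_cases hω : ω = 0
  · simp [hω]
  · simp only [Complex.sub_im, Complex.ofReal_im, Complex.normSq_apply, jw_re, jw_im, mul_zero,
      zero_add, zero_div, zero_sub]
    field_simp

lemma IsNI.re_staticGap_jw_nonneg (hP : IsNI P) (hpole : ¬ HasPole P (jw ω)) :
    0 ≤ (staticGap q P y (jw ω)).re := by
  have hpos {ω : ℝ} (hω : 0 < ω) (hpole : ¬ HasPole P (jw ω)) (y : Fin n → ℂ) :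
      0 ≤ (staticGap q P y (jw ω)).re := by
    rw [re_staticGap_jw]
    exact div_nonneg (neg_nonneg.2 (posSemidef_niKer_iff.1 (hP.2.2.1 ω hω hpole) y)) hω.le
  rcases lt_trichotomy ω 0 with hω | rfl | hω
  · rw [← neg_neg ω, ← star_jw] at hpole ⊢
    rw [hasPole_conj] at hpole
    rw [staticGap_conj]
    exact hpos (neg_pos.2 hω) hpole (star y)
  · simp [re_staticGap_jw]
  · exact hpos hω hpole y

lemma IsNI.exists_residue_staticGap_of_pos (hP : IsNI P) (hω : 0 < ω) (q : ℝ) (y : Fin n → ℂ) :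
    ∃ r : ℝ, 0 ≤ r ∧ Tendsto (fun s => (s - jw ω) * staticGap q P y s) (𝓝[≠] jw ω) (𝓝 r) := by
  obtain ⟨R, hR, hlim⟩ := hP.exists_residue hω
  refine ⟨(quadForm R y).re / ω, div_nonneg (re_quadForm_nonneg hR y) hω.le, ?_⟩
  have hsub : Tendsto (fun s => (s - jw ω) * q) (𝓝[≠] jw ω) (𝓝 0) :=
    tendsto_nhdsWithin_of_tendsto_nhds (Continuous.tendsto' (by fun_prop) _ _ (by simp))
  have hid : Tendsto (fun s => s) (𝓝[≠] jw ω) (𝓝 (jw ω)) := tendsto_id.mono_left nhdsWithin_le_nhds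
  have hgap := (hsub.add ((tendsto_quadForm hlim y).const_mul Complex.I)).div hid
    (jw_ne_zero hω.ne')
  have hvalue : (0 + Complex.I * quadForm R y) / jw ω = ((quadForm R y).re / ω : ℝ) := by
    rw [← Complex.re_add_im (quadForm R y), im_quadForm_eq_zero hR.1, jw, zero_add,
      mul_div_mul_left _ _ Complex.I_ne_zero]
    simp
  rw [hvalue] at hgap
  refine hgap.congr fun s => ?_
  rw [staticGap, Pi.div_apply, quadForm_smul, quadForm_smul, ← mul_div_assoc]
  congr 1
  linear_combination (s - jw ω) * quadForm (evalM P s) y * Complex.I_mul_I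

lemma IsNI.exists_residue_staticGap (hP : IsNI P) (hω : ω ≠ 0) (q : ℝ) (y : Fin n → ℂ) :
    ∃ r : ℝ, 0 ≤ r ∧ Tendsto (fun s => (s - jw ω) * staticGap q P y s) (𝓝[≠] jw ω) (𝓝 r) := by
  rcases hω.lt_or_gt with hneg | hpos
  · obtain ⟨r, hr, hlim⟩ := hP.exists_residue_staticGap_of_pos (neg_pos.2 hneg) q (star y)
    refine ⟨r, hr, ?_⟩
    have hstar : Tendsto star (𝓝[≠] jw ω) (𝓝[≠] jw (-ω)) := star_jw ω ▸
      tendsto_nhdsWithin_of_tendsto_nhds_of_eventually_within _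
        (continuous_star.continuousAt.tendsto.mono_left nhdsWithin_le_nhds)
        (eventually_mem_nhdsWithin.mono fun _ => star_injective.ne)
    have hconj := (continuous_star.tendsto (r : ℂ)).comp (hlim.comp hstar)
    rw [Complex.star_def, Complex.conj_ofReal] at hconj
    refine hconj.congr fun s => ?_
    rw [Function.comp_apply, Function.comp_apply, ← Complex.star_def, star_mul', star_sub,
      star_star, star_jw, neg_neg, ← staticGap_conj, star_star]
  · exact hP.exists_residue_staticGap_of_pos hpos q y

lemma IsNI.tendsto_mul_staticGap_zero (hP : IsNI P) (h0 : ¬ HasPole P 0) (q : ℝ)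
    (y : Fin n → ℂ) :
    Tendsto (fun s => s * staticGap q P y s) (𝓝[≠] 0)
      (𝓝 ((q - (quadForm (evalM P 0) y).re : ℝ) : ℂ)) := by
  have hreal : (quadForm (evalM P 0) y).im = 0 := by
    rw [evalM_zero_eq_map_evalR]
    exact im_quadForm_eq_zero (isHermitian_map_ofReal (hP.isHermitian_evalR_zero h0)) y
  have hvalue : ((q - (quadForm (evalM P 0) y).re : ℝ) : ℂ) = q - quadForm (evalM P 0) y :=
    Complex.ext (by simp) (by simp [hreal])
  rw [hvalue]
  refine (tendsto_const_nhds.sub (tendsto_quadForm (tendsto_evalM_nhdsNE h0) y)).congr' ?_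
  filter_upwards [eventually_mem_nhdsWithin] with s hs
  rw [staticGap, mul_div_cancel₀ _ hs]

lemma tendsto_staticGap_div_cocompact (hP : Proper P) (q : ℝ) (y : Fin n → ℂ) :
    Tendsto (fun s => staticGap q P y s / s) (cocompact ℂ) (𝓝 0) := by
  simpa [staticGap, div_eq_mul_inv] using ((tendsto_const_nhds.sub
    (tendsto_quadForm (tendsto_evalM_cocompact hP) y)).mul tendsto_inv_cocompact).mul
    tendsto_inv_cocompact

lemma IsNI.re_staticGap_nonneg (hP : IsNI P) (h0 : ¬ HasPole P 0)
    (hq : (quadForm (evalM P 0) y).re ≤ q) (hs : 0 < s.re) : 0 ≤ (staticGap q P y s).re := by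
  have hpole_re : ∀ p, HasPole P p → p.re ≤ 0 := fun p hp =>
    not_lt.1 fun hpos => hP.2.1 p hpos hp
  refine re_nonneg_of_boundary_of_residues (S := insert 0 {s | HasPole P s})
    ((hasPole_finite P).insert 0) (Set.forall_mem_insert.2 ⟨le_rfl, hpole_re⟩)
    (fun z hz => ?_) (Set.forall_mem_insert.2 ⟨fun _ => ?_, fun p hp hp0 => ?_⟩)
    le_rfl (by simpa using tendsto_staticGap_div_cocompact hP.1 q y) (fun ω hω => ?_) hs
  · rw [Set.mem_insert_iff, not_or] at hz
    exact ((differentiableAt_const _).sub (differentiableAt_quadForm_evalM hz.2 y)).div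
      differentiableAt_id hz.1
  · exact ⟨_, sub_nonneg.2 hq, by simpa using hP.tendsto_mul_staticGap_zero h0 q y⟩
  · rw [eq_jw_im hp0] at hp ⊢
    exact hP.exists_residue_staticGap (fun him => h0 (by simpa [him, jw] using hp)) q y
  · exact hP.re_staticGap_jw_nonneg fun h => hω (Set.mem_insert_of_mem _ h)

lemma IsNI.re_quadForm_evalInf_le (hP : IsNI P) (h0 : ¬ HasPole P 0) (y : Fin n → ℂ) :
    (quadForm ((evalInf P).map Complex.ofReal) y).re ≤
      (quadForm ((evalR P 0).map Complex.ofReal) y).re := by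
  have hlim := (Complex.continuous_re.tendsto _).comp
    ((tendsto_quadForm (tendsto_evalM_cocompact hP.1) y).comp tendsto_ofReal_atTop)
  refine le_of_tendsto hlim ?_
  filter_upwards [eventually_gt_atTop 0] with x hx
  have hgap := hP.re_staticGap_nonneg h0 le_rfl (y := y) (s := x) (by simpa using hx)
  rw [staticGap, Complex.div_ofReal_re, le_div_iff₀ hx, zero_mul, Complex.sub_re,
    Complex.ofReal_re, sub_nonneg, evalM_zero_eq_map_evalR] at hgap
  exact hgap

end NegativeImaginary

section ClosedLoop

variable {P C A B D G : Matrix (Fin n) (Fin n) (RatFunc ℝ)} {A₀ P₀ C₀ T₀ : Matrix (Fin n) (Fin n) ℂ}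
  {l : Filter ℂ} {s : ℂ}

lemma memRHinf_iff : MemRHinf G ↔ Proper G ∧ ∀ s : ℂ, 0 ≤ s.re → ¬ HasPole G s := by
  simp [MemRHinf, Proper, HasPole]

lemma memRHinf_of_tendsto {F : ℂ → Matrix (Fin n) (Fin n) ℂ} {M : Matrix (Fin n) (Fin n) ℂ}
    (hinf : Tendsto (evalM G) (cocompact ℂ) (𝓝 M))
    (hrhp : ∀ s : ℂ, 0 ≤ s.re → Tendsto (evalM G) (𝓝[≠] s) (𝓝 (F s))) : MemRHinf G :=
  memRHinf_iff.2 ⟨proper_of_tendsto hinf, fun s hs => not_hasPole_of_tendsto (hrhp s hs)⟩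

lemma MemRHinf.tendsto_nhdsNE (hG : MemRHinf G) (hs : 0 ≤ s.re) :
    Tendsto (evalM G) (𝓝[≠] s) (𝓝 (evalM G s)) :=
  tendsto_evalM_nhdsNE ((memRHinf_iff.1 hG).2 s hs)

lemma MemRHinf.tendsto_cocompact (hG : MemRHinf G) :
    Tendsto (evalM G) (cocompact ℂ) (𝓝 ((evalInf G).map Complex.ofReal)) :=
  tendsto_evalM_cocompact hG.1

lemma MemRHinf.mul (hA : MemRHinf A) (hB : MemRHinf B) : MemRHinf (A * B) :=
  memRHinf_of_tendsto
    (tendsto_evalM_mul cocompact_le_cofinite hA.tendsto_cocompact hB.tendsto_cocompact)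
    fun s hs => tendsto_evalM_mul (nhdsNE_le_cofinite s) (hA.tendsto_nhdsNE hs)
      (hB.tendsto_nhdsNE hs)

lemma MemRHinf.evalM_mul (hA : MemRHinf A) (hB : MemRHinf B) (hs : 0 ≤ s.re) :
    evalM (A * B) s = evalM A s * evalM B s :=
  evalM_eq_of_tendsto (tendsto_evalM_mul (nhdsNE_le_cofinite s) (hA.tendsto_nhdsNE hs)
    (hB.tendsto_nhdsNE hs))

lemma memRHinf_map_C (M : Matrix (Fin n) (Fin n) ℝ) : MemRHinf (M.map RatFunc.C) := by
  have hconst (l : Filter ℂ) :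
      Tendsto (evalM (M.map RatFunc.C)) l (𝓝 (M.map Complex.ofReal)) := by
    rw [funext (evalM_map_C M)]
    exact tendsto_const_nhds
  exact memRHinf_of_tendsto (hconst _) fun s _ => hconst _

lemma memRHinf_fromBlocks :
    MemRHinf (fromBlocks A B C D) ↔ MemRHinf A ∧ MemRHinf B ∧ MemRHinf C ∧ MemRHinf D := by
  simp only [MemRHinf, Sum.forall, fromBlocks_apply₁₁, fromBlocks_apply₁₂, fromBlocks_apply₂₁,
    fromBlocks_apply₂₂, forall_and]
  tauto

lemma feedbackStable_of_memRHinf (hC : MemRHinf C) (hdet : (1 - P * C).det ≠ 0)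
    (hinv : MemRHinf (1 - P * C)⁻¹) (hmul : MemRHinf ((1 - P * C)⁻¹ * P)) :
    FeedbackStable P C :=
  ⟨hdet, memRHinf_fromBlocks.2
    ⟨hinv, hmul, hC.mul hinv, by rw [Matrix.mul_assoc]; exact hC.mul hmul⟩⟩

lemma FeedbackStable.memRHinf_inv (h : FeedbackStable P C) : MemRHinf (1 - P * C)⁻¹ :=
  (memRHinf_fromBlocks.1 h.2).1

lemma FeedbackStable.memRHinf_inv_mul (h : FeedbackStable P C) :
    MemRHinf ((1 - P * C)⁻¹ * P) :=
  (memRHinf_fromBlocks.1 h.2).2.1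

lemma tendsto_evalM_one_sub_mul (hl : l ≤ cofinite) (hP : Tendsto (evalM P) l (𝓝 P₀))
    (hC : Tendsto (evalM C) l (𝓝 C₀)) :
    Tendsto (evalM (1 - P * C)) l (𝓝 (1 - P₀ * C₀)) :=
  ((tendsto_evalM_mul hl hP hC).const_sub 1).congr'
    ((evalM_one_sub (P * C)).filter_mono hl).symm

lemma det_ne_zero_of_tendsto [l.NeBot] (hl : l ≤ cofinite) (hA : Tendsto (evalM A) l (𝓝 A₀))
    (h₀ : A₀.det ≠ 0) : A.det ≠ 0 := by
  intro hzero
  have hdet : Tendsto (fun s => (evalM A s).det) l (𝓝 A₀.det) :=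
    (continuous_id.matrix_det.tendsto A₀).comp hA
  refine h₀ (tendsto_nhds_unique (hdet.congr' ?_) tendsto_const_nhds)
  filter_upwards [(evalC_det A).filter_mono hl] with s hs
  rw [← hs, hzero]
  exact RatFunc.eval_zero _ _

lemma tendsto_evalM_inv [l.NeBot] (hl : l ≤ cofinite) (hA : Tendsto (evalM A) l (𝓝 A₀))
    (h₀ : A₀.det ≠ 0) : Tendsto (evalM A⁻¹) l (𝓝 A₀⁻¹) := by
  have hinv : ContinuousAt Inv.inv A₀ :=
    continuousAt_matrix_inv A₀ (NormedRing.inverse_continuousAt (isUnit_iff_ne_zero.2 h₀).unit)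
  exact (hinv.tendsto.comp hA).congr'
    ((evalM_nonsing_inv (det_ne_zero_of_tendsto hl hA h₀)).filter_mono hl).symm

lemma det_ne_zero_of_tendsto_inv [l.NeBot] (hl : l ≤ cofinite) (hdet : A.det ≠ 0)
    (hA : Tendsto (evalM A) l (𝓝 A₀)) (hinv : Tendsto (evalM A⁻¹) l (𝓝 T₀)) : A₀.det ≠ 0 := by
  have hmul := tendsto_evalM_mul hl hA hinv
  rw [A.mul_nonsing_inv (isUnit_iff_ne_zero.2 hdet), funext evalM_one] at hmul
  exact det_ne_zero_of_right_inverse (tendsto_nhds_unique hmul tendsto_const_nhds)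

lemma FeedbackStable.det_one_sub_mul_ne_zero (h : FeedbackStable P C) (hC : MemRHinf C)
    (hs : 0 ≤ s.re) (hP : ¬ HasPole P s) : (1 - evalM P s * evalM C s).det ≠ 0 :=
  det_ne_zero_of_tendsto_inv (nhdsNE_le_cofinite s) h.1
    (tendsto_evalM_one_sub_mul (nhdsNE_le_cofinite s) (tendsto_evalM_nhdsNE hP)
      (hC.tendsto_nhdsNE hs)) (h.memRHinf_inv.tendsto_nhdsNE hs)

lemma FeedbackStable.det_one_sub_mul_evalInf_ne_zero (h : FeedbackStable P C) (hC : MemRHinf C)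
    (hP : Tendsto (evalM P) (cocompact ℂ) (𝓝 P₀)) :
    (1 - P₀ * (evalInf C).map Complex.ofReal).det ≠ 0 :=
  det_ne_zero_of_tendsto_inv cocompact_le_cofinite h.1
    (tendsto_evalM_one_sub_mul cocompact_le_cofinite hP hC.tendsto_cocompact)
    h.memRHinf_inv.tendsto_cocompact

lemma det_ne_zero_of_mulVec_eq_zero {M : Matrix (Fin n) (Fin n) ℂ}
    (h : ∀ x, M *ᵥ x = 0 → x = 0) : M.det ≠ 0 := fun hdet =>
  have ⟨x, hx, hMx⟩ := exists_mulVec_eq_zero_iff.2 hdet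
  hx (h x hMx)

end ClosedLoop

section StaticGain

variable {A P₀ : Matrix (Fin n) (Fin n) ℂ} {γ : ℝ}

lemma quadForm_sub_smul_mulVec (hA : A.IsHermitian) (γ : ℝ) (x : Fin n → ℂ) :
    (quadForm A (x - (γ : ℂ) • A *ᵥ x)).re =
      (quadForm A x).re - 2 * γ * euclNorm (A *ᵥ x) ^ 2 + γ ^ 2 * (quadForm A (A *ᵥ x)).re := by
  have hcross : star x ⬝ᵥ A *ᵥ A *ᵥ x = (euclNorm (A *ᵥ x) ^ 2 : ℝ) := by
    rw [dotProduct_mulVec, ← hA, ← star_mulVec, hA, star_dotProduct_self_eq_euclNorm_sq]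
  have hexpand : quadForm A (x - (γ : ℂ) • A *ᵥ x) =
      quadForm A x - (2 * γ * euclNorm (A *ᵥ x) ^ 2 : ℝ) +
        (γ ^ 2 : ℝ) * quadForm A (A *ᵥ x) := by
    simp only [quadForm, mulVec_sub, mulVec_smul, star_sub, star_smul, sub_dotProduct,
      dotProduct_sub, smul_dotProduct, dotProduct_smul, smul_eq_mul, hcross, Complex.star_def,
      Complex.conj_ofReal, star_dotProduct_self_eq_euclNorm_sq]
    push_cast
    ring
  rw [hexpand, Complex.add_re, Complex.sub_re, Complex.ofReal_re, Complex.re_ofReal_mul]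

lemma mul_euclNorm_mulVec_sq_lt (hγ : 0 < γ) (hA : A.PosSemidef)
    (hlt : ∀ y, y ≠ 0 → (quadForm A y).re < γ⁻¹ * euclNorm y ^ 2) {x : Fin n → ℂ}
    (hx : A *ᵥ x ≠ 0) : γ * euclNorm (A *ᵥ x) ^ 2 < (quadForm A x).re := by
  have hnonneg := re_quadForm_nonneg hA (x - (γ : ℂ) • A *ᵥ x)
  rw [quadForm_sub_smul_mulVec hA.1] at hnonneg
  have hbound : γ ^ 2 * (quadForm A (A *ᵥ x)).re < γ * euclNorm (A *ᵥ x) ^ 2 :=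
    calc γ ^ 2 * (quadForm A (A *ᵥ x)).re
      _ < γ ^ 2 * (γ⁻¹ * euclNorm (A *ᵥ x) ^ 2) := by gcongr; exact hlt _ hx
      _ = γ * euclNorm (A *ᵥ x) ^ 2 := by field_simp
  linarith

lemma det_one_sub_mul_ne_zero_of_static_bound (hγ : 0 < γ) (hA : A.PosSemidef)
    (hlt : ∀ y, y ≠ 0 → (quadForm A y).re < γ⁻¹ * euclNorm y ^ 2)
    (hP : ∀ y, (quadForm P₀ y).re ≤ γ * euclNorm y ^ 2) : (1 - P₀ * A).det ≠ 0 := by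
  refine det_ne_zero_of_mulVec_eq_zero fun x hx => ?_
  rw [sub_mulVec, one_mulVec, ← mulVec_mulVec, sub_eq_zero] at hx
  by_cases hy : A *ᵥ x = 0
  · rw [hx, hy, mulVec_zero]
  · have hswap : (quadForm P₀ (A *ᵥ x)).re = (quadForm A x).re := by
      rw [quadForm, ← hx, star_dotProduct, ← quadForm, Complex.star_def, Complex.conj_re]
    linarith [mul_euclNorm_mulVec_sq_lt hγ hA hlt hy, hP (A *ᵥ x)]

lemma quadForm_mul_inv_one_sub_smul (hA : (1 - (γ : ℂ) • A).det ≠ 0) (u : Fin n → ℂ) :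
    quadForm (A * (1 - (γ : ℂ) • A)⁻¹) u =
      quadForm A ((1 - (γ : ℂ) • A)⁻¹ *ᵥ u) -
        (γ * euclNorm (A *ᵥ (1 - (γ : ℂ) • A)⁻¹ *ᵥ u) ^ 2 : ℝ) := by
  set v := (1 - (γ : ℂ) • A)⁻¹ *ᵥ u with hv
  have hu : u = v - (γ : ℂ) • A *ᵥ v :=
    calc u
      _ = (1 - (γ : ℂ) • A) *ᵥ v := by
        rw [hv, mulVec_mulVec, mul_nonsing_inv _ (isUnit_iff_ne_zero.2 hA), one_mulVec]
      _ = v - (γ : ℂ) • A *ᵥ v := by rw [sub_mulVec, one_mulVec, smul_mulVec]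
  rw [quadForm, ← mulVec_mulVec, ← hv]
  nth_rw 1 [hu]
  simp [sub_dotProduct, star_dotProduct_self_eq_euclNorm_sq, quadForm]

end StaticGain

section LoopShift

variable {A : Matrix (Fin n) (Fin n) ℝ} {C : Matrix (Fin n) (Fin n) (RatFunc ℝ)}
  {y u : Fin n → ℂ} {c γ ω : ℝ} {s : ℂ}

lemma map_ofReal_smul (c : ℝ) (A : Matrix (Fin n) (Fin n) ℝ) :
    (c • A).map Complex.ofReal = (c : ℂ) • A.map Complex.ofReal := by
  ext i j
  simp

lemma map_ofReal_smul_one (c : ℝ) :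
    (c • (1 : Matrix (Fin n) (Fin n) ℝ)).map Complex.ofReal = (c : ℂ) • 1 := by
  rw [map_ofReal_smul, Matrix.map_one _ Complex.ofReal_zero Complex.ofReal_one]

lemma re_quadForm_smul_one_sub (c : ℝ) (A : Matrix (Fin n) (Fin n) ℝ) (y : Fin n → ℂ) :
    (quadForm ((c • 1 - A).map Complex.ofReal) y).re =
      c * euclNorm y ^ 2 - (quadForm (A.map Complex.ofReal) y).re := by
  rw [Matrix.map_sub _ Complex.ofReal_sub, map_ofReal_smul_one, quadForm_sub, quadForm_smul,
    quadForm_one, Complex.sub_re, ← Complex.ofReal_mul, Complex.ofReal_re]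

lemma LoewnerLE.re_quadForm_le (h : LoewnerLE A (c • 1)) (y : Fin n → ℂ) :
    (quadForm (A.map Complex.ofReal) y).re ≤ c * euclNorm y ^ 2 := by
  have := re_quadForm_nonneg (posSemidef_map_ofReal h) y
  rwa [re_quadForm_smul_one_sub, sub_nonneg] at this

lemma LoewnerLT.re_quadForm_lt (h : LoewnerLT A (c • 1)) (hy : y ≠ 0) :
    (quadForm (A.map Complex.ofReal) y).re < c * euclNorm y ^ 2 := by
  have := re_quadForm_map_ofReal_pos h hy
  rwa [re_quadForm_smul_one_sub, sub_pos] at this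

/-- The conditions imposed on the controller: strictly negative imaginary, with `C(∞) ≥ 0` and
`C(0) < γ⁻¹ I`. -/
def IsBoundedSNI (C : Matrix (Fin n) (Fin n) (RatFunc ℝ)) (γ : ℝ) : Prop :=
  IsSNI C ∧ (evalInf C).PosSemidef ∧ LoewnerLT (evalR C 0) (γ⁻¹ • 1)

lemma MemRHinf.not_hasPole_zero (hC : MemRHinf C) : ¬ HasPole C 0 :=
  (memRHinf_iff.1 hC).2 0 le_rfl

lemma IsBoundedSNI.re_quadForm_zero_lt (hC : IsBoundedSNI C γ) (hy : y ≠ 0) :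
    (quadForm (evalM C 0) y).re < γ⁻¹ * euclNorm y ^ 2 :=
  evalM_zero_eq_map_evalR C ▸ hC.2.2.re_quadForm_lt hy

lemma IsBoundedSNI.re_quadForm_evalInf_lt (hC : IsBoundedSNI C γ) (hy : y ≠ 0) :
    (quadForm ((evalInf C).map Complex.ofReal) y).re < γ⁻¹ * euclNorm y ^ 2 :=
  (hC.1.isNI.re_quadForm_evalInf_le hC.1.1.not_hasPole_zero y).trans_lt
    (hC.2.2.re_quadForm_lt hy)

lemma IsBoundedSNI.posSemidef_evalM_zero (hC : IsBoundedSNI C γ) : (evalM C 0).PosSemidef := by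
  have h0 := hC.1.1.not_hasPole_zero
  rw [evalM_zero_eq_map_evalR]
  exact posSemidef_of_re_quadForm_nonneg
    (isHermitian_map_ofReal (hC.1.isNI.isHermitian_evalR_zero h0)) fun y =>
      (re_quadForm_nonneg (posSemidef_map_ofReal hC.2.1) y).trans
        (hC.1.isNI.re_quadForm_evalInf_le h0 y)

lemma IsSNI.mul_im_quadForm_jw_neg (hC : IsSNI C) (hω : ω ≠ 0) (hy : y ≠ 0) :
    ω * (quadForm (evalM C (jw ω)) y).im < 0 := by
  rcases hω.lt_or_gt with hneg | hpos
  · rw [← neg_neg ω, ← star_jw, evalM_conj, quadForm_map_star, Complex.star_def, Complex.conj_im,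
      neg_mul_neg]
    exact mul_neg_of_pos_of_neg (neg_pos.2 hneg)
      (posDef_niKer_iff.1 (hC.2 _ (neg_pos.2 hneg)) _ (star_ne_zero.2 hy))
  · exact mul_neg_of_pos_of_neg hpos (posDef_niKer_iff.1 (hC.2 ω hpos) y hy)

lemma IsBoundedSNI.quadForm_ne (hC : IsBoundedSNI C γ) (hs : 0 ≤ s.re) (hy : y ≠ 0) :
    quadForm (evalM C s) y ≠ (γ⁻¹ * euclNorm y ^ 2 : ℝ) := by
  intro heq
  rcases hs.eq_or_lt with hre | hpos
  · rw [eq_jw_im hre.symm] at heq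
    by_cases him : s.im = 0
    · simp only [him, jw, Complex.ofReal_zero, mul_zero] at heq
      have hlt := hC.re_quadForm_zero_lt hy
      rw [heq, Complex.ofReal_re] at hlt
      exact hlt.false
    · have hlt := hC.1.mul_im_quadForm_jw_neg him hy
      rw [heq, Complex.ofReal_im, mul_zero] at hlt
      exact hlt.false
  · have hgap := hC.1.isNI.re_staticGap_nonneg hC.1.1.not_hasPole_zero (y := y) le_rfl hpos
    rw [staticGap, heq, ← Complex.ofReal_sub, div_eq_mul_inv, Complex.re_ofReal_mul,
      Complex.inv_re] at hgap
    have hinv : 0 < s.re / Complex.normSq s :=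
      div_pos hpos (Complex.normSq_pos.2 fun h => by simp [h] at hpos)
    exact (mul_neg_of_neg_of_pos (sub_neg.2 (hC.re_quadForm_zero_lt hy)) hinv).not_ge hgap

lemma IsBoundedSNI.det_one_sub_smul_ne_zero (hC : IsBoundedSNI C γ) (hγ : 0 < γ)
    (hs : 0 ≤ s.re) : (1 - (γ : ℂ) • evalM C s).det ≠ 0 := by
  refine det_ne_zero_of_mulVec_eq_zero fun v hv => by_contra fun hv0 => hC.quadForm_ne hs hv0 ?_
  rw [sub_mulVec, one_mulVec, smul_mulVec, sub_eq_zero] at hv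
  have hγC : (γ : ℂ) * quadForm (evalM C s) v = (euclNorm v ^ 2 : ℝ) := by
    rw [quadForm, ← smul_eq_mul, ← dotProduct_smul, ← hv, star_dotProduct_self_eq_euclNorm_sq]
  rw [Complex.ofReal_mul, ← hγC, Complex.ofReal_inv,
    inv_mul_cancel_left₀ (Complex.ofReal_ne_zero.2 hγ.ne')]

lemma IsBoundedSNI.det_one_sub_smul_evalInf_ne_zero (hC : IsBoundedSNI C γ) (hγ : 0 < γ) :
    (1 - (γ : ℂ) • (evalInf C).map Complex.ofReal).det ≠ 0 := by
  have hdet := det_one_sub_mul_ne_zero_of_static_bound (P₀ := (γ : ℂ) • 1) hγ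
    (posSemidef_map_ofReal hC.2.1) (fun y hy => hC.re_quadForm_evalInf_lt hy) fun y => by
      rw [quadForm_smul, quadForm_one, ← Complex.ofReal_mul, Complex.ofReal_re]
  rwa [smul_one_mul] at hdet

/-- The inverse `(I - γ C)⁻¹` of the return difference of `C` with the static plant `γ I`. -/
def shiftInv (C : Matrix (Fin n) (Fin n) (RatFunc ℝ)) (γ : ℝ) :
    Matrix (Fin n) (Fin n) (RatFunc ℝ) :=
  (1 - (γ • 1 : Matrix (Fin n) (Fin n) ℝ).map RatFunc.C * C)⁻¹

/-- The loop-shifted controller `C (I - γ C)⁻¹`, for which the plant bound `P(0) ≤ γ I` becomes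
`P(0) - γ I ≤ 0`. -/
def loopShift (C : Matrix (Fin n) (Fin n) (RatFunc ℝ)) (γ : ℝ) :
    Matrix (Fin n) (Fin n) (RatFunc ℝ) :=
  C * shiftInv C γ

lemma tendsto_evalM_shiftInv {l : Filter ℂ} [l.NeBot] (hl : l ≤ cofinite)
    {C₀ : Matrix (Fin n) (Fin n) ℂ} (hC : Tendsto (evalM C) l (𝓝 C₀))
    (hdet : (1 - (γ : ℂ) • C₀).det ≠ 0) :
    Tendsto (evalM (shiftInv C γ)) l (𝓝 (1 - (γ : ℂ) • C₀)⁻¹) := by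
  have hγ : Tendsto (evalM ((γ • 1 : Matrix (Fin n) (Fin n) ℝ).map RatFunc.C)) l
      (𝓝 ((γ : ℂ) • 1)) := by
    rw [funext (evalM_map_C _), map_ofReal_smul_one]
    exact tendsto_const_nhds
  have hreturn := tendsto_evalM_one_sub_mul hl hγ hC
  rw [smul_one_mul] at hreturn
  exact tendsto_evalM_inv hl hreturn hdet

lemma IsBoundedSNI.tendsto_shiftInv_nhdsNE (hC : IsBoundedSNI C γ) (hγ : 0 < γ)
    (hs : 0 ≤ s.re) :
    Tendsto (evalM (shiftInv C γ)) (𝓝[≠] s) (𝓝 (1 - (γ : ℂ) • evalM C s)⁻¹) :=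
  tendsto_evalM_shiftInv (nhdsNE_le_cofinite s) (hC.1.1.tendsto_nhdsNE hs)
    (hC.det_one_sub_smul_ne_zero hγ hs)

lemma IsBoundedSNI.tendsto_shiftInv_cocompact (hC : IsBoundedSNI C γ) (hγ : 0 < γ) :
    Tendsto (evalM (shiftInv C γ)) (cocompact ℂ)
      (𝓝 (1 - (γ : ℂ) • (evalInf C).map Complex.ofReal)⁻¹) :=
  tendsto_evalM_shiftInv cocompact_le_cofinite hC.1.1.tendsto_cocompact
    (hC.det_one_sub_smul_evalInf_ne_zero hγ)

lemma IsBoundedSNI.memRHinf_shiftInv (hC : IsBoundedSNI C γ) (hγ : 0 < γ) :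
    MemRHinf (shiftInv C γ) :=
  memRHinf_of_tendsto (hC.tendsto_shiftInv_cocompact hγ) fun _ hs =>
    hC.tendsto_shiftInv_nhdsNE hγ hs

lemma IsBoundedSNI.evalM_shiftInv (hC : IsBoundedSNI C γ) (hγ : 0 < γ) (hs : 0 ≤ s.re) :
    evalM (shiftInv C γ) s = (1 - (γ : ℂ) • evalM C s)⁻¹ :=
  evalM_eq_of_tendsto (hC.tendsto_shiftInv_nhdsNE hγ hs)

lemma IsBoundedSNI.memRHinf_loopShift (hC : IsBoundedSNI C γ) (hγ : 0 < γ) :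
    MemRHinf (loopShift C γ) :=
  hC.1.1.mul (hC.memRHinf_shiftInv hγ)

lemma IsBoundedSNI.evalM_loopShift (hC : IsBoundedSNI C γ) (hγ : 0 < γ) (hs : 0 ≤ s.re) :
    evalM (loopShift C γ) s = evalM C s * (1 - (γ : ℂ) • evalM C s)⁻¹ := by
  rw [loopShift, hC.1.1.evalM_mul (hC.memRHinf_shiftInv hγ) hs, hC.evalM_shiftInv hγ hs]

lemma IsBoundedSNI.re_jw_mul_quadForm_loopShift_pos (hC : IsBoundedSNI C γ) (hγ : 0 < γ)
    (hω : ω ≠ 0) (hu : u ≠ 0) :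
    0 < (jw ω * quadForm (evalM (loopShift C γ) (jw ω)) u).re := by
  have hdet := hC.det_one_sub_smul_ne_zero hγ (jw_re ω).ge
  have hv : (1 - (γ : ℂ) • evalM C (jw ω))⁻¹ *ᵥ u ≠ 0 := fun hv => hu <| by
    rw [← one_mulVec u, ← mul_nonsing_inv _ (isUnit_iff_ne_zero.2 hdet), ← mulVec_mulVec, hv,
      mulVec_zero]
  rw [hC.evalM_loopShift hγ (jw_re ω).ge, quadForm_mul_inv_one_sub_smul hdet, Complex.mul_re, jw_re,
    jw_im, Complex.sub_im, Complex.ofReal_im, zero_mul, sub_zero, zero_sub, neg_pos]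
  exact hC.1.mul_im_quadForm_jw_neg hω hv

lemma IsBoundedSNI.tendsto_quadForm_loopShift_cocompact (hC : IsBoundedSNI C γ) (hγ : 0 < γ)
    (u : Fin n → ℂ) : ∃ c : ℝ, 0 ≤ c ∧
      Tendsto (fun s => quadForm (evalM (loopShift C γ) s) u) (cocompact ℂ) (𝓝 c) := by
  set A := (evalInf C).map Complex.ofReal
  have hA : A.PosSemidef := posSemidef_map_ofReal hC.2.1
  set v := (1 - (γ : ℂ) • A)⁻¹ *ᵥ u
  have hlim := tendsto_quadForm (tendsto_evalM_mul cocompact_le_cofinite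
    hC.1.1.tendsto_cocompact (hC.tendsto_shiftInv_cocompact hγ)) u
  have hvalue : quadForm A v = (quadForm A v).re :=
    Complex.ext rfl (im_quadForm_eq_zero hA.1 v)
  rw [quadForm_mul_inv_one_sub_smul (hC.det_one_sub_smul_evalInf_ne_zero hγ), hvalue,
    ← Complex.ofReal_sub] at hlim
  have hnonneg : γ * euclNorm (A *ᵥ v) ^ 2 ≤ (quadForm A v).re := by
    by_cases hAv : A *ᵥ v = 0
    · simpa [hAv, euclNorm] using re_quadForm_nonneg hA v
    · exact (mul_euclNorm_mulVec_sq_lt hγ hA (fun y hy => hC.re_quadForm_evalInf_lt hy) hAv).le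
  exact ⟨_, sub_nonneg.2 hnonneg, hlim⟩

lemma IsBoundedSNI.re_mul_quadForm_loopShift_pos (hC : IsBoundedSNI C γ) (hγ : 0 < γ)
    (hs : 0 ≤ s.re) (hs0 : s ≠ 0) (hu : u ≠ 0) :
    0 < (s * quadForm (evalM (loopShift C γ) s) u).re := by
  set f : ℂ → ℂ := fun s => s * quadForm (evalM (loopShift C γ) s) u
  have hpole := (memRHinf_iff.1 (hC.memRHinf_loopShift hγ)).2
  have hdiff : ∀ z : ℂ, 0 ≤ z.re → DifferentiableAt ℂ f z := fun z hz =>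
    differentiableAt_id.mul (differentiableAt_quadForm_evalM (hpole z hz) u)
  have hcl : DiffContOnCl ℂ f {z | 0 < z.re} := by
    refine DifferentiableOn.diffContOnCl fun z hz => (hdiff z ?_).differentiableWithinAt
    rwa [Complex.closure_setOfPred_lt_re] at hz
  have haxis : ∀ ω : ℝ, 0 ≤ (f (jw ω)).re := fun ω => by
    by_cases hω : ω = 0
    · simp [f, hω, jw]
    · exact (hC.re_jw_mul_quadForm_loopShift_pos hγ hω hu).le
  obtain ⟨c, hc, hlim⟩ := hC.tendsto_quadForm_loopShift_cocompact hγ u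
  have hdiv : Tendsto (fun s => f s / s) (cocompact ℂ) (𝓝 c) := by
    refine hlim.congr' ?_
    filter_upwards [cocompact_le_cofinite (eventually_cofinite_ne 0)] with z hz
    rw [mul_div_cancel_left₀ _ hz]
  rcases hs.eq_or_lt with hre | hpos
  · have him : s.im ≠ 0 := fun him => hs0 (Complex.ext hre.symm him)
    have := hC.re_jw_mul_quadForm_loopShift_pos hγ him hu
    rwa [← eq_jw_im hre.symm] at this
  · exact re_pos_of_boundary (f := f) hcl (fun z hz => re_nonneg_of_boundary hcl hc hdiv haxis hz)
      (hC.re_jw_mul_quadForm_loopShift_pos hγ one_ne_zero hu) hpos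

end LoopShift

section Passivity

variable {M Z W P₀ C₀ : Matrix (Fin n) (Fin n) ℂ}

lemma continuous_euclNorm : Continuous (euclNorm : (Fin n → ℂ) → ℝ) :=
  continuous_norm.comp (PiLp.continuous_toLp 2 _)

lemma exists_euclNorm_eq_one_smul {u : Fin n → ℂ} (hu : u ≠ 0) :
    ∃ v, euclNorm v = 1 ∧ u = (euclNorm u : ℂ) • v := by
  have hpos := euclNorm_pos hu
  refine ⟨(euclNorm u : ℂ)⁻¹ • u, ?_, (smul_inv_smul₀ (Complex.ofReal_ne_zero.2 hpos.ne') u).symm⟩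
  rw [euclNorm_smul, norm_inv, Complex.norm_real, Real.norm_of_nonneg hpos.le,
    inv_mul_cancel₀ hpos.ne']

lemma exists_mul_euclNorm_sq_le_re_quadForm (hM : ∀ u, u ≠ 0 → 0 < (quadForm M u).re) :
    ∃ c > 0, ∀ u, c * euclNorm u ^ 2 ≤ (quadForm M u).re := by
  have hcont : Continuous fun u : EuclideanSpace ℂ (Fin n) => (quadForm M u.ofLp).re :=
    Complex.continuous_re.comp
      (continuous_quadForm.comp (continuous_const.prodMk (PiLp.continuous_ofLp 2 _)))
  obtain ⟨c, hc, hsphere⟩ := (isCompact_sphere (0 : EuclideanSpace ℂ (Fin n)) 1).exists_forall_le'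
    hcont.continuousOn fun u hu => hM u.ofLp fun h => by
      simp [(WithLp.ofLp_eq_zero 2).1 h] at hu
  refine ⟨c, hc, fun u => ?_⟩
  by_cases hu : u = 0
  · simp [hu, euclNorm, quadForm]
  obtain ⟨v, hnorm, huv⟩ := exists_euclNorm_eq_one_smul hu
  calc c * euclNorm u ^ 2
    _ ≤ (quadForm M v).re * euclNorm u ^ 2 := by
      gcongr
      exact hsphere (WithLp.toLp 2 v) (by simpa [euclNorm] using hnorm)
    _ = (quadForm M u).re := by
      conv_rhs => rw [huv, quadForm_smul_vec, Complex.re_ofReal_mul, Complex.norm_real,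
        Real.norm_of_nonneg (euclNorm_nonneg u), mul_comm]

open scoped Matrix.Norms.L2Operator in
lemma eventually_mul_euclNorm_sq_le_re_quadForm (hM : ∀ u, u ≠ 0 → 0 < (quadForm M u).re) :
    ∃ c > 0, ∀ᶠ N in 𝓝 M, ∀ u, c * euclNorm u ^ 2 ≤ (quadForm N u).re := by
  obtain ⟨c, hc, hle⟩ := exists_mul_euclNorm_sq_le_re_quadForm hM
  refine ⟨c / 2, half_pos hc, ?_⟩
  filter_upwards [Metric.ball_mem_nhds M (half_pos hc)] with N hN u
  have hdiff : |(quadForm (N - M) u).re| ≤ c / 2 * euclNorm u ^ 2 :=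
    calc |(quadForm (N - M) u).re|
      _ ≤ ‖N - M‖ * euclNorm u ^ 2 :=
        (Complex.abs_re_le_norm _).trans (norm_quadForm_le (N - M) u)
      _ ≤ c / 2 * euclNorm u ^ 2 := by
        gcongr
        exact (mem_ball_iff_norm.1 hN).le
  rw [quadForm_sub, Complex.sub_re] at hdiff
  linarith [hle u, (abs_le.1 hdiff).1]

lemma re_quadForm_eq_re_star_mulVec_dotProduct (W : Matrix (Fin n) (Fin n) ℂ) (X : Fin n → ℂ) :
    (star (W *ᵥ X) ⬝ᵥ X).re = (quadForm W X).re := by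
  rw [star_dotProduct, ← quadForm, Complex.star_def, Complex.conj_re]

lemma euclNorm_le_of_passive {a b X : Fin n → ℂ} {c K : ℝ} (hc : 0 < c)
    (hX : X = a + Z *ᵥ (b - W *ᵥ X)) (hZ : 0 ≤ (quadForm Z (b - W *ᵥ X)).re)
    (hW : c * euclNorm X ^ 2 ≤ (quadForm W X).re) (ha : euclNorm a ≤ K) (hb : euclNorm b ≤ K)
    (hWX : euclNorm (W *ᵥ X) ≤ K * euclNorm X) :
    euclNorm X ≤ 1 + (K + 2 * K ^ 2) / c := by
  have hre_le (x y : Fin n → ℂ) : |(star x ⬝ᵥ y).re| ≤ euclNorm x * euclNorm y :=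
    (Complex.abs_re_le_norm _).trans (norm_star_dotProduct_le x y)
  have hK : 0 ≤ K := (euclNorm_nonneg a).trans ha
  have hX0 := euclNorm_nonneg X
  have hZX : Z *ᵥ (b - W *ᵥ X) = X - a := (sub_eq_of_eq_add' hX).symm
  rw [quadForm, hZX, star_sub, sub_dotProduct, dotProduct_sub, dotProduct_sub] at hZ
  simp only [Complex.sub_re, re_quadForm_eq_re_star_mulVec_dotProduct] at hZ
  have hbX : (star b ⬝ᵥ X).re ≤ K * euclNorm X := (le_abs_self _).trans <|
    (hre_le b X).trans (by gcongr)
  have hba : -(star b ⬝ᵥ a).re ≤ K * K := (neg_le_abs _).trans <|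
    (hre_le b a).trans (mul_le_mul hb ha (euclNorm_nonneg a) hK)
  have hWXa : (star (W *ᵥ X) ⬝ᵥ a).re ≤ K * euclNorm X * K := (le_abs_self _).trans <|
    (hre_le (W *ᵥ X) a).trans (mul_le_mul hWX ha (euclNorm_nonneg a) (by positivity))
  have hquad : c * euclNorm X ^ 2 ≤ K * euclNorm X + K ^ 2 + K ^ 2 * euclNorm X := by linarith
  by_contra! hlt
  have hone : 1 ≤ euclNorm X := (le_add_of_nonneg_right (by positivity)).trans hlt.le
  have hlarge : K + 2 * K ^ 2 < c * euclNorm X := by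
    rw [← div_lt_iff₀' hc]
    linarith
  nlinarith [hquad, mul_le_mul_of_nonneg_left hone (sq_nonneg K)]

-- The loop variables `X = (γ η - ξ) / s` and `η` are related by `s C (1 - γ C)⁻¹` and by
-- `(γ - P) / s`, both of which are passive on the right half-plane.
lemma eq_of_feedback_eq {ξ η w₁ w₂ : Fin n → ℂ} {γ s : ℂ} (hs : s ≠ 0)
    (hdet : (1 - γ • C₀).det ≠ 0) (hξ : ξ = w₁ + P₀ *ᵥ η) (hη : η = w₂ + C₀ *ᵥ ξ) :
    η = (1 - γ • C₀)⁻¹ *ᵥ w₂ - (s • (C₀ * (1 - γ • C₀)⁻¹)) *ᵥ (s⁻¹ • (γ • η - ξ)) ∧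
      s⁻¹ • (γ • η - ξ) = -s⁻¹ • w₁ + (s⁻¹ • (γ • 1 - P₀)) *ᵥ η := by
  have hunit := isUnit_iff_ne_zero.2 hdet
  have hcomm : C₀ * (1 - γ • C₀)⁻¹ = (1 - γ • C₀)⁻¹ * C₀ := by
    have : (1 - γ • C₀) * C₀ = C₀ * (1 - γ • C₀) := by simp [Matrix.sub_mul, Matrix.mul_sub]
    rw [← nonsing_inv_mul_cancel_left _ (C₀ * _) hunit, ← Matrix.mul_assoc _ C₀, this,
      mul_nonsing_inv_cancel_right _ _ hunit]
  have hreturn : (1 - γ • C₀) *ᵥ η = w₂ - C₀ *ᵥ (γ • η - ξ) := by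
    rw [sub_mulVec, one_mulVec, smul_mulVec, mulVec_sub, mulVec_smul]
    nth_rw 1 [hη]
    abel
  constructor
  · rw [smul_mulVec, mulVec_smul, smul_inv_smul₀ hs, hcomm, ← mulVec_mulVec, ← mulVec_sub,
      ← hreturn, mulVec_mulVec, nonsing_inv_mul _ hunit, one_mulVec]
  · rw [smul_mulVec, sub_mulVec, smul_mulVec, one_mulVec, neg_smul]
    nth_rw 1 [hξ]
    module

end Passivity

section Sufficiency

variable {P C : Matrix (Fin n) (Fin n) (RatFunc ℝ)} {γ : ℝ} {s : ℂ}

lemma quadForm_inv_smul_sub (γ : ℝ) (P : Matrix (Fin n) (Fin n) (RatFunc ℝ)) (y : Fin n → ℂ)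
    (s : ℂ) :
    quadForm (s⁻¹ • ((γ : ℂ) • 1 - evalM P s)) y = staticGap (γ * euclNorm y ^ 2) P y s := by
  rw [quadForm_smul, quadForm_sub, quadForm_smul, quadForm_one, staticGap, Complex.ofReal_mul,
    div_eq_inv_mul]

lemma IsNI.re_quadForm_inv_smul_sub_nonneg (hP : IsNI P) (h0 : ¬ HasPole P 0)
    (hbound : LoewnerLE (evalR P 0) (γ • 1)) (hs : 0 < s.re) (y : Fin n → ℂ) :
    0 ≤ (quadForm (s⁻¹ • ((γ : ℂ) • 1 - evalM P s)) y).re := by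
  rw [quadForm_inv_smul_sub]
  refine hP.re_staticGap_nonneg h0 ?_ hs
  rw [evalM_zero_eq_map_evalR]
  exact hbound.re_quadForm_le y

open scoped Matrix.Norms.L2Operator in
lemma IsBoundedSNI.exists_eventually_bound (hC : IsBoundedSNI C γ) (hγ : 0 < γ) (hs : 0 ≤ s.re)
    (hs0 : s ≠ 0) (w₁ w₂ : Fin n → ℂ) :
    ∃ K : ℝ, ∀ᶠ z in 𝓝 s, euclNorm (-z⁻¹ • w₁) ≤ K ∧
      euclNorm (evalM (shiftInv C γ) z *ᵥ w₂) ≤ K ∧ ‖z • evalM (loopShift C γ) z‖ ≤ K ∧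
      ‖z‖ ≤ K := by
  have hshift := continuousAt_evalM ((memRHinf_iff.1 (hC.memRHinf_shiftInv hγ)).2 s hs)
  have hloop := continuousAt_evalM ((memRHinf_iff.1 (hC.memRHinf_loopShift hγ)).2 s hs)
  have ha : ContinuousAt (fun z : ℂ => euclNorm (-z⁻¹ • w₁)) s :=
    continuous_euclNorm.continuousAt.comp ((continuousAt_inv₀ hs0).neg.smul continuousAt_const)
  have hb : ContinuousAt (fun z => euclNorm (evalM (shiftInv C γ) z *ᵥ w₂)) s :=
    continuous_euclNorm.continuousAt.comp
      ((continuous_id.matrix_mulVec continuous_const).continuousAt.comp hshift)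
  have hW : ContinuousAt (fun z : ℂ => ‖z • evalM (loopShift C γ) z‖) s :=
    (continuousAt_id.smul hloop).norm
  have hbdd {f : ℂ → ℝ} (hf : ContinuousAt f s) : ∀ᶠ K in atTop, ∀ᶠ z in 𝓝 s, f z ≤ K :=
    (eventually_gt_atTop (f s)).mono fun K hK =>
      (hf.eventually_lt_const hK).mono fun _ => le_of_lt
  obtain ⟨K, hKa, hKb, hKW, hKz⟩ := ((hbdd ha).and <| (hbdd hb).and <| (hbdd hW).and <|
    hbdd continuousAt_id.norm).exists
  exact ⟨K, hKa.and <| hKb.and <| hKW.and hKz⟩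

open scoped Matrix.Norms.L2Operator in
lemma euclNorm_le_of_feedback_eq (hP : IsNI P) (h0 : ¬ HasPole P 0)
    (hbound : LoewnerLE (evalR P 0) (γ • 1)) (hC : IsBoundedSNI C γ) (hγ : 0 < γ)
    (hs : 0 < s.re) {c K : ℝ} (hc : 0 < c) {ξ w₁ w₂ : Fin n → ℂ}
    (hξ : ξ = w₁ + evalM P s *ᵥ (w₂ + evalM C s *ᵥ ξ))
    (hcoercive : ∀ u, c * euclNorm u ^ 2 ≤ (quadForm (s • evalM (loopShift C γ) s) u).re)
    (ha : euclNorm (-s⁻¹ • w₁) ≤ K) (hb : euclNorm (evalM (shiftInv C γ) s *ᵥ w₂) ≤ K)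
    (hW : ‖s • evalM (loopShift C γ) s‖ ≤ K) (hsK : ‖s‖ ≤ K) :
    euclNorm ξ ≤ γ * (K + K * (1 + (K + 2 * K ^ 2) / c)) + K * (1 + (K + 2 * K ^ 2) / c) := by
  set η := w₂ + evalM C s *ᵥ ξ with hη
  obtain ⟨X, hX⟩ : ∃ X, X = s⁻¹ • ((γ : ℂ) • η - ξ) := ⟨_, rfl⟩
  set R := 1 + (K + 2 * K ^ 2) / c
  have hs0 : s ≠ 0 := fun h => by simp [h] at hs
  have hK : 0 ≤ K := (norm_nonneg s).trans hsK
  obtain ⟨hηX, hXη⟩ := eq_of_feedback_eq hs0 (hC.det_one_sub_smul_ne_zero hγ hs.le) hξ hη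
  rw [← hC.evalM_loopShift hγ hs.le, ← hC.evalM_shiftInv hγ hs.le, ← hX] at hηX
  rw [← hX, hηX] at hXη
  have hWX : euclNorm ((s • evalM (loopShift C γ) s) *ᵥ X) ≤ K * euclNorm X :=
    (euclNorm_mulVec_le _ X).trans (mul_le_mul_of_nonneg_right hW (euclNorm_nonneg X))
  have hXR : euclNorm X ≤ R :=
    euclNorm_le_of_passive hc hXη (hP.re_quadForm_inv_smul_sub_nonneg h0 hbound hs _)
      (hcoercive X) ha hb hWX
  have hηR : euclNorm η ≤ K + K * R :=
    calc euclNorm η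
      _ ≤ _ := (congrArg euclNorm hηX).trans_le (euclNorm_sub_le _ _)
      _ ≤ K + K * R := add_le_add hb (hWX.trans (mul_le_mul_of_nonneg_left hXR hK))
  calc euclNorm ξ
    _ = euclNorm ((γ : ℂ) • η - s • X) := by rw [hX, smul_inv_smul₀ hs0, sub_sub_cancel]
    _ ≤ euclNorm ((γ : ℂ) • η) + euclNorm (s • X) := euclNorm_sub_le _ _
    _ = γ * euclNorm η + ‖s‖ * euclNorm X := by
      rw [euclNorm_smul, euclNorm_smul, Complex.norm_real, Real.norm_of_nonneg hγ.le]
    _ ≤ γ * (K + K * R) + K * R := by gcongr; exact euclNorm_nonneg X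

open scoped Matrix.Norms.L2Operator in
lemma exists_eventually_euclNorm_le (hP : IsNI P) (h0 : ¬ HasPole P 0)
    (hbound : LoewnerLE (evalR P 0) (γ • 1)) (hC : IsBoundedSNI C γ) (hγ : 0 < γ)
    (hs : 0 ≤ s.re) (hs0 : s ≠ 0) (w₁ w₂ : Fin n → ℂ) :
    ∃ K : ℝ, ∀ᶠ z in 𝓝 s, 0 < z.re → ∀ ξ : Fin n → ℂ,
      ξ = w₁ + evalM P z *ᵥ (w₂ + evalM C z *ᵥ ξ) → euclNorm ξ ≤ K := by
  have hloop := continuousAt_evalM ((memRHinf_iff.1 (hC.memRHinf_loopShift hγ)).2 s hs)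
  obtain ⟨c, hc, hcoercive⟩ := eventually_mul_euclNorm_sq_le_re_quadForm
    (M := s • evalM (loopShift C γ) s) fun u hu => by
      rw [quadForm_smul]
      exact hC.re_mul_quadForm_loopShift_pos hγ hs hs0 hu
  obtain ⟨K, hK⟩ := hC.exists_eventually_bound hγ hs hs0 w₁ w₂
  refine ⟨γ * (K + K * (1 + (K + 2 * K ^ 2) / c)) + K * (1 + (K + 2 * K ^ 2) / c), ?_⟩
  filter_upwards [(continuousAt_id.smul hloop).eventually hcoercive, hK] with
    z hW ⟨ha, hb, hWK, hzK⟩ hz ξ hξ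
  exact euclNorm_le_of_feedback_eq hP h0 hbound hC hγ hz hc hξ hW ha hb hWK hzK

lemma evalM_inv_mulVec_eq (hdet : (1 - P * C).det ≠ 0) (w₁ w₂ : Fin n → ℂ) :
    ∀ᶠ z in cofinite, ∀ ξ, ξ = evalM (1 - P * C)⁻¹ z *ᵥ w₁ + evalM ((1 - P * C)⁻¹ * P) z *ᵥ w₂ →
      ξ = w₁ + evalM P z *ᵥ (w₂ + evalM C z *ᵥ ξ) := by
  filter_upwards [evalM_mul (1 - P * C) (1 - P * C)⁻¹, evalM_one_sub (P * C), evalM_mul P C,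
    evalM_mul (1 - P * C)⁻¹ P] with z hinv hsub hPC hTP ξ hξ
  rw [mul_nonsing_inv _ (isUnit_iff_ne_zero.2 hdet), evalM_one, hsub, hPC] at hinv
  rw [hTP, ← mulVec_mulVec, ← mulVec_add] at hξ
  have hreturn : (1 - evalM P z * evalM C z) *ᵥ ξ = w₁ + evalM P z *ᵥ w₂ := by
    rw [hξ, mulVec_mulVec, ← hinv, one_mulVec]
  rw [sub_mulVec, one_mulVec, ← mulVec_mulVec, sub_eq_iff_eq_add] at hreturn
  rw [mulVec_add, ← add_assoc]
  exact hreturn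

lemma not_hasPole_closedLoop (hP : IsNI P) (h0 : ¬ HasPole P 0)
    (hbound : LoewnerLE (evalR P 0) (γ • 1)) (hC : IsBoundedSNI C γ) (hγ : 0 < γ)
    (hdet : (1 - P * C).det ≠ 0) (hs : 0 ≤ s.re) (hs0 : s ≠ 0) :
    ¬ HasPole (1 - P * C)⁻¹ s ∧ ¬ HasPole ((1 - P * C)⁻¹ * P) s := by
  set l := 𝓝[{z | s.re < z.re}] s
  have : l.NeBot := by
    rw [← mem_closure_iff_nhdsWithin_neBot, Complex.closure_setOfPred_lt_re]
    exact le_refl s.re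
  have hl : l ≤ 𝓝[≠] s := nhdsWithin_mono s fun z (hz : s.re < z.re) h => hz.ne (h ▸ rfl)
  have hcolumns (w₁ w₂ : Fin n → ℂ) : ∃ K : ℝ, ∀ᶠ z in l,
      euclNorm (evalM (1 - P * C)⁻¹ z *ᵥ w₁ + evalM ((1 - P * C)⁻¹ * P) z *ᵥ w₂) ≤ K := by
    obtain ⟨K, hK⟩ := exists_eventually_euclNorm_le hP h0 hbound hC hγ hs hs0 w₁ w₂
    refine ⟨K, ?_⟩
    filter_upwards [nhdsWithin_le_nhds hK, eventually_mem_nhdsWithin,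
      (hl.trans (nhdsNE_le_cofinite s)) (evalM_inv_mulVec_eq hdet w₁ w₂)] with z hKz hz hloop
    exact hKz (hs.trans_lt hz) _ (hloop _ rfl)
  constructor
  all_goals
    rintro ⟨i, j, hij⟩
    refine not_isPoleAt_of_isBigO_one hl ?_ hij
  · obtain ⟨K, hK⟩ := hcolumns (Pi.single j 1) 0
    refine .of_bound K (hK.mono fun z hz => ?_)
    rw [mulVec_zero, add_zero] at hz
    simpa [evalM] using (norm_apply_le_euclNorm _ i).trans hz
  · obtain ⟨K, hK⟩ := hcolumns 0 (Pi.single j 1)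
    refine .of_bound K (hK.mono fun z hz => ?_)
    rw [mulVec_zero, zero_add] at hz
    simpa [evalM] using (norm_apply_le_euclNorm _ i).trans hz

lemma IsNI.re_quadForm_evalInf_le_of_loewnerLE (hP : IsNI P) (h0 : ¬ HasPole P 0)
    (hbound : LoewnerLE (evalR P 0) (γ • 1)) (y : Fin n → ℂ) :
    (quadForm ((evalInf P).map Complex.ofReal) y).re ≤ γ * euclNorm y ^ 2 :=
  (hP.re_quadForm_evalInf_le h0 y).trans (hbound.re_quadForm_le y)

theorem feedbackStable_of_isBoundedSNI (hP : IsNI P) (h0 : ¬ HasPole P 0)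
    (hbound : LoewnerLE (evalR P 0) (γ • 1)) (hC : IsBoundedSNI C γ) (hγ : 0 < γ) :
    FeedbackStable P C := by
  have hP_zero := tendsto_evalM_nhdsNE h0
  have hP_inf := tendsto_evalM_cocompact hP.1
  have hreturn_zero := tendsto_evalM_one_sub_mul (nhdsNE_le_cofinite 0) hP_zero
    (hC.1.1.tendsto_nhdsNE le_rfl)
  have hreturn_inf := tendsto_evalM_one_sub_mul cocompact_le_cofinite hP_inf
    hC.1.1.tendsto_cocompact
  have hdet_zero : (1 - evalM P 0 * evalM C 0).det ≠ 0 :=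
    det_one_sub_mul_ne_zero_of_static_bound hγ hC.posSemidef_evalM_zero
      (fun y hy => hC.re_quadForm_zero_lt hy) fun y =>
        evalM_zero_eq_map_evalR P ▸ hbound.re_quadForm_le y
  have hdet_inf := det_one_sub_mul_ne_zero_of_static_bound hγ (posSemidef_map_ofReal hC.2.1)
    (fun y hy => hC.re_quadForm_evalInf_lt hy) (hP.re_quadForm_evalInf_le_of_loewnerLE h0 hbound)
  have hdet := det_ne_zero_of_tendsto (nhdsNE_le_cofinite 0) hreturn_zero hdet_zero
  have hinv_zero := tendsto_evalM_inv (nhdsNE_le_cofinite 0) hreturn_zero hdet_zero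
  have hinv_inf := tendsto_evalM_inv cocompact_le_cofinite hreturn_inf hdet_inf
  refine feedbackStable_of_memRHinf hC.1.1 hdet (memRHinf_iff.2 ⟨?_, fun s hs => ?_⟩)
    (memRHinf_iff.2 ⟨?_, fun s hs => ?_⟩)
  · exact proper_of_tendsto hinv_inf
  · rcases eq_or_ne s 0 with rfl | hs0
    · exact not_hasPole_of_tendsto hinv_zero
    · exact (not_hasPole_closedLoop hP h0 hbound hC hγ hdet hs hs0).1
  · exact proper_of_tendsto (tendsto_evalM_mul cocompact_le_cofinite hinv_inf hP_inf)
  · rcases eq_or_ne s 0 with rfl | hs0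
    · exact not_hasPole_of_tendsto (tendsto_evalM_mul (nhdsNE_le_cofinite 0) hinv_zero hP_zero)
    · exact (not_hasPole_closedLoop hP h0 hbound hC hγ hdet hs hs0).2

end Sufficiency

section TestPlants

variable {P Q : Matrix (Fin n) (Fin n) (RatFunc ℝ)} {A B M : Matrix (Fin n) (Fin n) ℝ}
  {γ γ₁ γ₂ ω w β : ℝ} {s : ℂ}

/-- The plants of the robust stability problem: negative imaginary, without a pole at the origin,
and with static gain `0 ≤ P(0) ≤ γ I`. -/
def IsAdmissible (P : Matrix (Fin n) (Fin n) (RatFunc ℝ)) (γ : ℝ) : Prop :=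
  IsNI P ∧ ¬ HasPole P 0 ∧ LoewnerLE 0 (evalR P 0) ∧ LoewnerLE (evalR P 0) (γ • 1)

lemma evalR_zero_eq_of_evalM (h : evalM P 0 = M.map Complex.ofReal) : evalR P 0 = M := by
  rw [evalM_zero_eq_map_evalR] at h
  exact map_injective Complex.ofReal_injective h

lemma isAdmissible_of_evalM_zero (hP : IsNI P) (h0 : ¬ HasPole P 0)
    (hM : evalM P 0 = M.map Complex.ofReal) (hnonneg : M.PosSemidef)
    (hle : LoewnerLE M (γ • 1)) : IsAdmissible P γ := by
  refine ⟨hP, h0, ?_, ?_⟩ <;> rw [evalR_zero_eq_of_evalM hM]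
  · rwa [LoewnerLE, sub_zero]
  · exact hle

lemma IsAdmissible.add (hP : IsAdmissible P γ₁) (hQ : IsAdmissible Q γ₂) :
    IsAdmissible (P + Q) (γ₁ + γ₂) := by
  obtain ⟨hP, hP0, hP_nonneg, hP_le⟩ := hP
  obtain ⟨hQ, hQ0, hQ_nonneg, hQ_le⟩ := hQ
  have hvalue : evalR (P + Q) 0 = evalR P 0 + evalR Q 0 := by
    refine evalR_zero_eq_of_evalM ?_
    rw [evalM_add_of_not_hasPole hP0 hQ0, evalM_zero_eq_map_evalR, evalM_zero_eq_map_evalR,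
      Matrix.map_add _ Complex.ofReal_add]
  refine ⟨hP.add hQ hP0 hQ0, not_hasPole_add hP0 hQ0, ?_, ?_⟩ <;>
    rw [LoewnerLE] at * <;> rw [hvalue]
  · simpa only [sub_zero] using hP_nonneg.add hQ_nonneg
  · simpa only [add_smul, add_sub_add_comm] using hP_le.add hQ_le

lemma isNI_map_C (hM : M.IsHermitian) : IsNI (M.map RatFunc.C) := by
  have hRH := memRHinf_iff.1 (memRHinf_map_C M)
  refine isNI_of_eventually hRH.1 (fun s hs => hRH.2 s hs.le) (hRH.2 0 le_rfl)
    (.of_forall fun s _ _ => posSemidef_niKer_iff.2 fun y => ?_)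
    fun ω _ => ⟨0, .zero, tendsto_sub_smul_evalM_of_not_hasPole (hRH.2 _ (jw_re ω).ge)⟩
  rw [evalM_map_C]
  exact (im_quadForm_eq_zero (isHermitian_map_ofReal hM) y).le

lemma isAdmissible_map_C (hM : M.PosSemidef) (hle : LoewnerLE M (γ • 1)) :
    IsAdmissible (M.map RatFunc.C) γ :=
  isAdmissible_of_evalM_zero (isNI_map_C hM.1) (memRHinf_map_C M).not_hasPole_zero
    (evalM_map_C M 0) hM hle

lemma evalC_C (c : ℝ) (s : ℂ) : evalC (RatFunc.C c) s = c := by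
  simp [evalC]

lemma evalC_X (s : ℂ) : evalC RatFunc.X s = s := by
  simp [evalC]

/-- The washout filter `-(s / (s + β)) A`; for `A ≥ 0` and `β > 0` it is a negative imaginary plant
with zero static gain. -/
def washout (β : ℝ) (A : Matrix (Fin n) (Fin n) ℝ) : Matrix (Fin n) (Fin n) (RatFunc ℝ) :=
  (RatFunc.X * (RatFunc.X + RatFunc.C β)⁻¹) • (-A).map RatFunc.C

lemma evalM_washout (β : ℝ) (A : Matrix (Fin n) (Fin n) ℝ) :
    evalM (washout β A) =ᶠ[cofinite] fun s => (s * (s + β)⁻¹) • (-A).map Complex.ofReal := by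
  filter_upwards [evalM_smul (RatFunc.X * (RatFunc.X + RatFunc.C β)⁻¹) ((-A).map RatFunc.C),
    evalC_mul RatFunc.X (RatFunc.X + RatFunc.C β)⁻¹, evalC_inv (RatFunc.X + RatFunc.C β),
    evalC_add RatFunc.X (RatFunc.C β)] with s hsmul hmul hinv hadd
  rw [washout, hsmul, hmul, hinv, hadd, evalC_X, evalC_C, evalM_map_C]

lemma tendsto_evalM_washout_nhdsNE (hs : s + β ≠ 0) (A : Matrix (Fin n) (Fin n) ℝ) :
    Tendsto (evalM (washout β A)) (𝓝[≠] s) (𝓝 ((s * (s + β)⁻¹) • (-A).map Complex.ofReal)) := by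
  refine Tendsto.congr' ((evalM_washout β A).symm.filter_mono (nhdsNE_le_cofinite s)) ?_
  have hcont : ContinuousAt (fun z : ℂ => (z * (z + β)⁻¹) • (-A).map Complex.ofReal) s :=
    (continuousAt_id.mul ((continuousAt_id.add continuousAt_const).inv₀ hs)).smul
      continuousAt_const
  exact hcont.tendsto.mono_left nhdsWithin_le_nhds

lemma tendsto_evalM_washout_cocompact (β : ℝ) (A : Matrix (Fin n) (Fin n) ℝ) :
    Tendsto (evalM (washout β A)) (cocompact ℂ) (𝓝 ((-A).map Complex.ofReal)) := by
  refine Tendsto.congr' ((evalM_washout β A).symm.filter_mono cocompact_le_cofinite) ?_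
  have hinv : Tendsto (fun s : ℂ => (1 + β * s⁻¹)⁻¹) (cocompact ℂ) (𝓝 1) := by
    simpa using ((tendsto_inv_cocompact.const_mul (β : ℂ)).const_add 1).inv₀ (by simp)
  have hgain : Tendsto (fun s : ℂ => s * (s + β)⁻¹) (cocompact ℂ) (𝓝 1) := by
    refine hinv.congr' ?_
    filter_upwards [cocompact_le_cofinite (eventually_cofinite_ne (0 : ℂ))] with s hs
    rw [← inv_inv (s * (s + β)⁻¹), mul_inv, inv_inv]
    congr 1
    field_simp
  simpa only [one_smul] using hgain.smul_const ((-A).map Complex.ofReal)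

lemma isNI_washout (hβ : 0 < β) (hA : A.PosSemidef) : IsNI (washout β A) := by
  have hden {s : ℂ} (hs : 0 ≤ s.re) : s + β ≠ 0 := fun h => by
    have hre := congrArg Complex.re h
    rw [Complex.add_re, Complex.ofReal_re, Complex.zero_re] at hre
    linarith
  have hregular {s : ℂ} (hs : 0 ≤ s.re) : ¬ HasPole (washout β A) s :=
    not_hasPole_of_tendsto (tendsto_evalM_washout_nhdsNE (hden hs) A)
  refine isNI_of_eventually (proper_of_tendsto (tendsto_evalM_washout_cocompact β A))
    (fun s hs => hregular hs.le) (hregular le_rfl) ?_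
    fun ω _ => ⟨0, .zero, tendsto_sub_smul_evalM_of_not_hasPole (hregular (jw_re ω).ge)⟩
  filter_upwards [evalM_washout β A] with s hs hre him
  refine posSemidef_niKer_iff.2 fun y => ?_
  have hgain : 0 ≤ (s * (s + β)⁻¹).im := by
    rw [Complex.mul_im, Complex.inv_re, hre, zero_mul, zero_add, Complex.add_re, hre, zero_add,
      Complex.ofReal_re]
    exact mul_nonneg him.le (div_nonneg hβ.le (Complex.normSq_nonneg _))
  have hA_real := im_quadForm_eq_zero (posSemidef_map_ofReal hA).1 y
  have hA_nonneg := re_quadForm_nonneg (posSemidef_map_ofReal hA) y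
  rw [hs, Matrix.map_neg _ Complex.ofReal_neg, ← neg_one_smul ℂ, smul_smul, quadForm_smul,
    mul_neg_one, Complex.mul_im, hA_real, mul_zero, zero_add, Complex.neg_im, neg_mul,
    neg_nonpos]
  exact mul_nonneg hgain hA_nonneg

lemma isAdmissible_washout (hβ : 0 < β) (hA : A.PosSemidef) (hγ : 0 ≤ γ) :
    IsAdmissible (washout β A) γ := by
  have hlim := tendsto_evalM_washout_nhdsNE (β := β) (s := 0) (by simp [hβ.ne']) A
  refine isAdmissible_of_evalM_zero (M := 0) (isNI_washout hβ hA) (not_hasPole_of_tendsto hlim)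
    ?_ .zero ?_
  · rw [evalM_eq_of_tendsto hlim, zero_mul, zero_smul, Matrix.map_zero _ Complex.ofReal_zero]
  · rw [LoewnerLE, sub_zero]
    exact PosSemidef.one.smul hγ

/-- The undamped resonator `(A + s B) / (s² + w²)`, whose values on the imaginary axis are Hermitian
for symmetric `A` and skew-symmetric `B`. -/
def resonator (w : ℝ) (A B : Matrix (Fin n) (Fin n) ℝ) : Matrix (Fin n) (Fin n) (RatFunc ℝ) :=
  (RatFunc.X * RatFunc.X + RatFunc.C (w ^ 2))⁻¹ •
    (A.map RatFunc.C + (RatFunc.X : RatFunc ℝ) • B.map RatFunc.C)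

lemma evalM_resonator (w : ℝ) (A B : Matrix (Fin n) (Fin n) ℝ) :
    evalM (resonator w A B) =ᶠ[cofinite] fun s =>
      (s * s + w ^ 2)⁻¹ • (A.map Complex.ofReal + s • B.map Complex.ofReal) := by
  filter_upwards [evalM_smul (RatFunc.X * RatFunc.X + RatFunc.C (w ^ 2))⁻¹
      (A.map RatFunc.C + (RatFunc.X : RatFunc ℝ) • B.map RatFunc.C),
    evalM_add (A.map RatFunc.C) ((RatFunc.X : RatFunc ℝ) • B.map RatFunc.C),
    evalM_smul (RatFunc.X : RatFunc ℝ) (B.map RatFunc.C),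
    evalC_inv (RatFunc.X * RatFunc.X + RatFunc.C (w ^ 2)),
    evalC_add (RatFunc.X * RatFunc.X) (RatFunc.C (w ^ 2)),
    evalC_mul RatFunc.X RatFunc.X] with s hsmul hadd hXB hinv hden hXX
  rw [resonator, hsmul, hadd, hXB, hinv, hden, hXX, evalC_X, evalC_C, evalM_map_C, evalM_map_C,
    Complex.ofReal_pow]

lemma tendsto_evalM_resonator_nhdsNE (hs : s * s + w ^ 2 ≠ 0) (A B : Matrix (Fin n) (Fin n) ℝ) :
    Tendsto (evalM (resonator w A B)) (𝓝[≠] s)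
      (𝓝 ((s * s + w ^ 2)⁻¹ • (A.map Complex.ofReal + s • B.map Complex.ofReal))) := by
  refine Tendsto.congr' ((evalM_resonator w A B).symm.filter_mono (nhdsNE_le_cofinite s)) ?_
  have hcont : ContinuousAt (fun z : ℂ =>
      (z * z + w ^ 2)⁻¹ • (A.map Complex.ofReal + z • B.map Complex.ofReal)) s :=
    (((continuousAt_id.mul continuousAt_id).add continuousAt_const).inv₀ hs).smul
      (continuousAt_const.add (continuousAt_id.smul continuousAt_const))
  exact hcont.tendsto.mono_left nhdsWithin_le_nhds

lemma tendsto_evalM_resonator_cocompact (w : ℝ) (A B : Matrix (Fin n) (Fin n) ℝ) :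
    Tendsto (evalM (resonator w A B)) (cocompact ℂ) (𝓝 0) := by
  refine Tendsto.congr' ((evalM_resonator w A B).symm.filter_mono cocompact_le_cofinite) ?_
  have hinv := tendsto_inv_cocompact
  have hden : Tendsto (fun s : ℂ => (1 + w ^ 2 * (s⁻¹ * s⁻¹))⁻¹) (cocompact ℂ) (𝓝 1) := by
    simpa using (((hinv.mul hinv).const_mul ((w : ℂ) ^ 2)).const_add 1).inv₀ (by simp)
  have hlim := (hden.mul hinv).smul
    ((hinv.smul_const (A.map Complex.ofReal)).add_const (B.map Complex.ofReal))
  rw [mul_zero, zero_smul] at hlim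
  refine hlim.congr' ?_
  filter_upwards [cocompact_le_cofinite (eventually_cofinite_ne (0 : ℂ))] with s hs
  have hsplit : (s * s + w ^ 2)⁻¹ * s = (1 + w ^ 2 * (s⁻¹ * s⁻¹))⁻¹ * s⁻¹ := by
    rw [← inv_inv ((s * s + w ^ 2)⁻¹ * s), mul_inv, inv_inv, ← mul_inv]
    congr 1
    field_simp
  rw [← hsplit, mul_smul, smul_add, smul_inv_smul₀ hs]

lemma isHermitian_map_add_jw_smul (hA : A.IsHermitian) (hB : Bᵀ = -B) (ω : ℝ) :
    (A.map Complex.ofReal + jw ω • B.map Complex.ofReal).IsHermitian := by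
  have hBc : (B.map Complex.ofReal)ᴴ = -B.map Complex.ofReal := by
    ext i j
    simpa using congrArg Complex.ofReal (congrFun (congrFun hB i) j)
  rw [IsHermitian, conjTranspose_add, conjTranspose_smul, (isHermitian_map_ofReal hA).eq, hBc,
    star_jw, smul_neg, ← neg_smul]
  simp [jw]

lemma mul_self_add_sq_eq (s : ℂ) (w : ℝ) : s * s + w ^ 2 = (s - jw w) * (s + jw w) := by
  rw [jw]
  linear_combination (w : ℂ) ^ 2 * Complex.I_sq

lemma jw_mul_self_add_sq_eq (ω w : ℝ) : jw ω * jw ω + w ^ 2 = ((w ^ 2 - ω ^ 2 : ℝ) : ℂ) := by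
  rw [jw]
  push_cast
  linear_combination (ω : ℂ) ^ 2 * Complex.I_sq

lemma mul_self_add_sq_ne_zero_of_re_pos (hs : 0 < s.re) (w : ℝ) : s * s + w ^ 2 ≠ 0 := by
  rw [mul_self_add_sq_eq]
  refine mul_ne_zero ?_ ?_ <;> refine fun h => hs.ne' ?_ <;>
    simpa [jw_re] using congrArg Complex.re h

lemma jw_mul_self_add_sq_ne_zero (h : ω ^ 2 ≠ w ^ 2) : jw ω * jw ω + w ^ 2 ≠ 0 := by
  rw [jw_mul_self_add_sq_eq, Complex.ofReal_ne_zero]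
  exact sub_ne_zero.2 h.symm

lemma tendsto_residue_resonator (hw : w ≠ 0) (A B : Matrix (Fin n) (Fin n) ℝ) :
    Tendsto (fun s : ℂ => (s - jw w) • Complex.I • evalM (resonator w A B) s) (𝓝[≠] jw w)
      (𝓝 (((2 * w : ℝ) : ℂ)⁻¹ • (A.map Complex.ofReal + jw w • B.map Complex.ofReal))) := by
  have h2w : jw w + jw w ≠ 0 := by simpa [← two_mul] using jw_ne_zero hw
  have hcont : ContinuousAt (fun s : ℂ => (Complex.I * (s + jw w)⁻¹) •
      (A.map Complex.ofReal + s • B.map Complex.ofReal)) (jw w) :=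
    (continuousAt_const.mul ((continuousAt_id.add continuousAt_const).inv₀ h2w)).smul
      (continuousAt_const.add (continuousAt_id.smul continuousAt_const))
  have hresidue : Complex.I * (jw w + jw w)⁻¹ = ((2 * w : ℝ) : ℂ)⁻¹ := by
    rw [jw, ← mul_add, mul_inv, mul_inv_cancel_left₀ Complex.I_ne_zero, Complex.ofReal_mul,
      Complex.ofReal_ofNat, two_mul]
  rw [← hresidue]
  refine (hcont.tendsto.mono_left nhdsWithin_le_nhds).congr' ?_
  filter_upwards [nhdsNE_le_cofinite _ (evalM_resonator w A B), eventually_mem_nhdsWithin]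
    with s hs hne
  rw [hs, mul_self_add_sq_eq, smul_smul, smul_smul, mul_inv, mul_comm (s - jw w) Complex.I,
    mul_assoc, mul_inv_cancel_left₀ (sub_ne_zero.2 hne)]

lemma isNI_resonator (hw : 0 < w) (hA : A.IsHermitian) (hB : Bᵀ = -B)
    (hnonneg : ∀ y, 0 ≤ (quadForm (A.map Complex.ofReal + jw w • B.map Complex.ofReal) y).re) :
    IsNI (resonator w A B) := by
  have hzero : (0 : ℂ) * 0 + w ^ 2 ≠ 0 := by simpa using hw.ne'
  refine isNI_of_eventually (proper_of_tendsto (tendsto_evalM_resonator_cocompact w A B))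
    (fun s hs => not_hasPole_of_tendsto
      (tendsto_evalM_resonator_nhdsNE (mul_self_add_sq_ne_zero_of_re_pos hs w) A B))
    (not_hasPole_of_tendsto (tendsto_evalM_resonator_nhdsNE hzero A B)) ?_ fun ω hω => ?_
  · filter_upwards [evalM_resonator w A B] with s hs hre _
    refine posSemidef_niKer_iff.2 fun y => le_of_eq ?_
    rw [hs, eq_jw_im hre, jw_mul_self_add_sq_eq, quadForm_smul, ← Complex.ofReal_inv,
      Complex.im_ofReal_mul, im_quadForm_eq_zero (isHermitian_map_add_jw_smul hA hB _), mul_zero]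
  · rcases eq_or_ne ω w with rfl | hne
    · refine ⟨_, ?_, tendsto_residue_resonator hω.ne' A B⟩
      have hpsd := posSemidef_of_re_quadForm_nonneg (isHermitian_map_add_jw_smul hA hB ω) hnonneg
      refine hpsd.smul ?_
      rw [← Complex.ofReal_inv, Complex.zero_le_real]
      positivity
    · have hsq : ω ^ 2 ≠ w ^ 2 := fun h => hne ((pow_left_inj₀ hω.le hw.le two_ne_zero).1 h)
      exact ⟨0, .zero, tendsto_sub_smul_evalM_of_not_hasPole (not_hasPole_of_tendsto
        (tendsto_evalM_resonator_nhdsNE (jw_mul_self_add_sq_ne_zero hsq) A B))⟩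

lemma isAdmissible_resonator (hw : 0 < w) (hB : Bᵀ = -B)
    (hnonneg : ∀ y, 0 ≤ (quadForm (A.map Complex.ofReal + jw w • B.map Complex.ofReal) y).re)
    (hA : A.PosSemidef) (hle : LoewnerLE ((w ^ 2)⁻¹ • A) (γ • 1)) :
    IsAdmissible (resonator w A B) γ := by
  have hlim := tendsto_evalM_resonator_nhdsNE (w := w) (s := 0) (by simpa using hw.ne') A B
  refine isAdmissible_of_evalM_zero (isNI_resonator hw hA.1 hB hnonneg)
    (not_hasPole_of_tendsto hlim) ?_ (hA.smul (by positivity)) hle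
  rw [evalM_eq_of_tendsto hlim]
  ext i j
  simp

lemma isAdmissible_resonator_smul_one {k : ℝ} (hw : 0 < w) (hk : 0 ≤ k)
    (hgain : (w ^ 2)⁻¹ * k ≤ γ) : IsAdmissible (n := n) (resonator w (k • 1) 0) γ := by
  have hpsd : (k • (1 : Matrix (Fin n) (Fin n) ℝ)).PosSemidef := PosSemidef.one.smul hk
  refine isAdmissible_resonator hw (by simp) (fun y => ?_) hpsd ?_
  · simpa using re_quadForm_nonneg (posSemidef_map_ofReal hpsd) y
  · rw [LoewnerLE, smul_smul, ← sub_smul]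
    exact PosSemidef.one.smul (sub_nonneg.2 hgain)

lemma evalM_resonator_jw (h : ω ^ 2 ≠ w ^ 2) (A B : Matrix (Fin n) (Fin n) ℝ) :
    ¬ HasPole (resonator w A B) (jw ω) ∧ evalM (resonator w A B) (jw ω) =
      ((w ^ 2 - ω ^ 2 : ℝ) : ℂ)⁻¹ • (A.map Complex.ofReal + jw ω • B.map Complex.ofReal) := by
  have hlim := tendsto_evalM_resonator_nhdsNE (jw_mul_self_add_sq_ne_zero h) A B
  rw [jw_mul_self_add_sq_eq] at hlim
  exact ⟨not_hasPole_of_tendsto hlim, evalM_eq_of_tendsto hlim⟩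

end TestPlants

section Interpolation

variable {A B : Matrix (Fin n) (Fin n) ℝ} {S : Matrix (Fin n) (Fin n) ℂ} {γ ω w c l : ℝ}

lemma posSemidef_of_re_quadForm_map_ofReal_nonneg (hA : A.IsHermitian)
    (h : ∀ y, 0 ≤ (quadForm (A.map Complex.ofReal) y).re) : A.PosSemidef := by
  refine .of_dotProduct_mulVec_nonneg hA fun x => ?_
  have hx := h (Complex.ofReal ∘ x)
  rw [re_quadForm_map_ofReal] at hx
  simpa [Function.comp_def, ← Pi.zero_def] using hx

lemma isHermitian_smul_one (c : ℝ) : (c • (1 : Matrix (Fin n) (Fin n) ℝ)).IsHermitian :=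
  isHermitian_one.smul (IsSelfAdjoint.all c)

lemma loewnerLE_smul_one (hA : A.IsHermitian)
    (h : ∀ y, (quadForm (A.map Complex.ofReal) y).re ≤ c * euclNorm y ^ 2) :
    LoewnerLE A (c • 1) := by
  refine posSemidef_of_re_quadForm_map_ofReal_nonneg ((isHermitian_smul_one c).sub hA) fun y => ?_
  rw [re_quadForm_smul_one_sub]
  exact sub_nonneg.2 (h y)

lemma map_re_add_jw_smul_map_im (hω : ω ≠ 0) (S : Matrix (Fin n) (Fin n) ℂ) :
    (S.map Complex.re).map Complex.ofReal +
      jw ω • (ω⁻¹ • S.map Complex.im).map Complex.ofReal = S := by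
  ext i j
  simp [jw, Complex.ext_iff, hω]

lemma isHermitian_map_re (hS : S.IsHermitian) : (S.map Complex.re).IsHermitian := by
  ext i j
  simpa using congrArg Complex.re (congrFun (congrFun hS.eq i) j)

lemma transpose_map_im (hS : S.IsHermitian) : (S.map Complex.im)ᵀ = -S.map Complex.im := by
  ext i j
  simpa [neg_eq_iff_eq_neg] using congrArg Complex.im (congrFun (congrFun hS.eq i) j)

-- A resonator with natural frequency `w` near `ω` attains a prescribed value at `jω` with
-- arbitrarily small static gain.
lemma eventually_static_gain_le (hω : ω ≠ 0) (hγ : 0 < γ) (l : ℝ) :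
    ∀ᶠ w in 𝓝 ω, (w ^ 2)⁻¹ * |w ^ 2 - ω ^ 2| * l ≤ γ := by
  have hcont : ContinuousAt (fun w : ℝ => (w ^ 2)⁻¹ * |w ^ 2 - ω ^ 2| * l) ω := by
    fun_prop (disch := positivity)
  exact (hcont.eventually_lt_const (by simpa using hγ)).mono fun _ => le_of_lt

lemma exists_isAdmissible_evalM_jw_eq_neg_smul_one (hγ : 0 < γ) (hω : 0 < ω) (hl : 0 ≤ l) :
    ∃ P : Matrix (Fin n) (Fin n) (RatFunc ℝ), IsAdmissible P γ ∧ ¬ HasPole P (jw ω) ∧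
      evalM P (jw ω) = -(l : ℂ) • 1 := by
  obtain ⟨w, hgain, hw, hwω⟩ :=
    (((eventually_static_gain_le hω.ne' hγ l).filter_mono nhdsWithin_le_nhds).and
      (Ioo_mem_nhdsLT hω)).exists
  have hsq : w ^ 2 < ω ^ 2 := pow_lt_pow_left₀ hwω hw.le two_ne_zero
  rw [abs_of_neg (sub_neg.2 hsq), neg_sub] at hgain
  obtain ⟨hregular, hvalue⟩ := evalM_resonator_jw hsq.ne'
    (((ω ^ 2 - w ^ 2) * l) • (1 : Matrix (Fin n) (Fin n) ℝ)) 0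
  refine ⟨_, isAdmissible_resonator_smul_one hw (mul_nonneg (sub_nonneg.2 hsq.le) hl)
    (by rwa [← mul_assoc]), hregular, ?_⟩
  have hne : ((w ^ 2 - ω ^ 2 : ℝ) : ℂ) ≠ 0 := Complex.ofReal_ne_zero.2 (sub_neg.2 hsq).ne
  rw [hvalue, Matrix.map_zero _ Complex.ofReal_zero, smul_zero, add_zero, map_ofReal_smul_one,
    smul_smul, ← neg_sub (w ^ 2), neg_mul, Complex.ofReal_neg, Complex.ofReal_mul, mul_neg,
    inv_mul_cancel_left₀ hne]

open scoped Matrix.Norms.L2Operator in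
lemma re_quadForm_add_smul_one_add_jw_smul_nonneg (hw : 0 ≤ w)
    (hl : ‖A.map Complex.ofReal‖ + w * ‖B.map Complex.ofReal‖ ≤ l) (y : Fin n → ℂ) :
    0 ≤ (quadForm ((A + l • 1).map Complex.ofReal + jw w • B.map Complex.ofReal) y).re := by
  have hA := (abs_le.1 ((Complex.abs_re_le_norm _).trans (norm_quadForm_le
    (A.map Complex.ofReal) y))).1
  have hB : -(w * ‖B.map Complex.ofReal‖ * euclNorm y ^ 2) ≤
      (jw w * quadForm (B.map Complex.ofReal) y).re := by
    refine (abs_le.1 ((Complex.abs_re_le_norm _).trans ?_)).1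
    rw [norm_mul, jw, norm_mul, Complex.norm_I, one_mul, Complex.norm_real,
      Real.norm_of_nonneg hw, mul_assoc]
    exact mul_le_mul_of_nonneg_left (norm_quadForm_le _ y) hw
  rw [Matrix.map_add _ Complex.ofReal_add, map_ofReal_smul_one, quadForm_add, quadForm_add,
    quadForm_smul, quadForm_smul, quadForm_one, Complex.add_re, Complex.add_re,
    ← Complex.ofReal_mul, Complex.ofReal_re]
  nlinarith [mul_le_mul_of_nonneg_right hl (sq_nonneg (euclNorm y))]

open scoped Matrix.Norms.L2Operator in
lemma loewnerLE_add_smul_one (hA : A.IsHermitian) (hl : ‖A.map Complex.ofReal‖ ≤ l) :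
    LoewnerLE (A + l • 1) ((2 * l) • 1) := by
  rw [LoewnerLE, two_mul, add_smul, add_sub_add_right_eq_sub]
  refine loewnerLE_smul_one hA fun y => ?_
  calc (quadForm (A.map Complex.ofReal) y).re
    _ ≤ ‖A.map Complex.ofReal‖ * euclNorm y ^ 2 :=
      (Complex.re_le_norm _).trans (norm_quadForm_le _ y)
    _ ≤ l * euclNorm y ^ 2 := mul_le_mul_of_nonneg_right hl (sq_nonneg _)

lemma LoewnerLE.smul {k : ℝ} (h : LoewnerLE A (c • 1)) (hk : 0 ≤ k) (hkc : k * c ≤ γ) :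
    LoewnerLE (k • A) (γ • 1) := by
  have hsplit : γ • 1 - k • A = (γ - k * c) • 1 + k • (c • 1 - A) := by
    rw [sub_smul, smul_sub, smul_smul, sub_add_sub_cancel]
  rw [LoewnerLE, hsplit]
  exact (PosSemidef.one.smul (sub_nonneg.2 hkc)).add (PosSemidef.smul h hk)

open scoped Matrix.Norms.L2Operator in
lemma isAdmissible_resonator_smul {r : ℝ} (hw : 0 < w) (hr : 0 ≤ r) (hA : A.IsHermitian)
    (hB : Bᵀ = -B) (hl : ‖A.map Complex.ofReal‖ + w * ‖B.map Complex.ofReal‖ ≤ l)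
    (hgain : (w ^ 2)⁻¹ * r * (2 * l) ≤ γ) :
    IsAdmissible (resonator w (r • (A + l • 1)) (r • B)) γ := by
  have hlA : ‖A.map Complex.ofReal‖ ≤ l := (le_add_of_nonneg_right (by positivity)).trans hl
  have hpsd : (A + l • 1).PosSemidef := by
    refine posSemidef_of_re_quadForm_map_ofReal_nonneg
      (hA.add (isHermitian_smul_one l)) fun y => ?_
    simpa [jw] using re_quadForm_add_smul_one_add_jw_smul_nonneg (B := B) le_rfl
      (by simpa using hlA) y
  refine isAdmissible_resonator hw ?_ (fun y => ?_) (hpsd.smul hr) ?_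
  · rw [transpose_smul, hB, smul_neg]
  · rw [map_ofReal_smul, map_ofReal_smul, smul_comm, ← smul_add, quadForm_smul,
      Complex.re_ofReal_mul]
    exact mul_nonneg hr (re_quadForm_add_smul_one_add_jw_smul_nonneg hw.le hl y)
  · rw [smul_smul]
    exact (loewnerLE_add_smul_one hA hlA).smul (by positivity) hgain

open scoped Matrix.Norms.L2Operator in
lemma exists_isAdmissible_evalM_jw_eq_add_smul_one (hγ : 0 < γ) (hω : 0 < ω)
    (hS : S.IsHermitian) : ∃ l : ℝ, 0 ≤ l ∧ ∃ P : Matrix (Fin n) (Fin n) (RatFunc ℝ),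
      IsAdmissible P γ ∧ ¬ HasPole P (jw ω) ∧ evalM P (jw ω) = S + (l : ℂ) • 1 := by
  set A := S.map Complex.re
  set B := ω⁻¹ • S.map Complex.im
  have hB : Bᵀ = -B := by rw [transpose_smul, transpose_map_im hS, smul_neg]
  set l := ‖A.map Complex.ofReal‖ + 2 * ω * ‖B.map Complex.ofReal‖
  obtain ⟨w, hgain, hωw, hw2⟩ :=
    (((eventually_static_gain_le hω.ne' hγ (2 * l)).filter_mono nhdsWithin_le_nhds).and
      (Ioo_mem_nhdsGT (lt_two_mul_self hω))).exists
  have hlw : ‖A.map Complex.ofReal‖ + w * ‖B.map Complex.ofReal‖ ≤ l :=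
    add_le_add_right (mul_le_mul_of_nonneg_right hw2.le (norm_nonneg _)) _
  have hsq : ω ^ 2 < w ^ 2 := pow_lt_pow_left₀ hωw hω.le two_ne_zero
  set r := w ^ 2 - ω ^ 2
  have hr : 0 < r := sub_pos.2 hsq
  rw [abs_of_pos hr] at hgain
  obtain ⟨hregular, hvalue⟩ := evalM_resonator_jw hsq.ne (r • (A + l • 1)) (r • B)
  refine ⟨l, by positivity, _, isAdmissible_resonator_smul (hω.trans hωw) hr.le
    (isHermitian_map_re hS) hB hlw hgain, hregular, ?_⟩
  rw [hvalue, map_ofReal_smul, map_ofReal_smul, smul_comm (jw ω), ← smul_add,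
    inv_smul_smul₀ (Complex.ofReal_ne_zero.2 hr.ne'), Matrix.map_add _ Complex.ofReal_add,
    map_ofReal_smul_one, add_right_comm, map_re_add_jw_smul_map_im hω.ne']

lemma exists_isAdmissible_evalM_jw_eq_neg_one_add_I_smul_one (hγ : 0 ≤ γ) (hω : 0 < ω)
    (hc : 0 ≤ c) :
    ∃ P : Matrix (Fin n) (Fin n) (RatFunc ℝ), IsAdmissible P γ ∧ ¬ HasPole P (jw ω) ∧
      evalM P (jw ω) = -(c * (1 + Complex.I)) • 1 := by
  have hone : (1 + Complex.I) ≠ 0 := fun h => by simpa using congrArg Complex.re h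
  have hfactor : jw ω + ω = ω * (1 + Complex.I) := by rw [jw]; ring
  have hω' : (ω : ℂ) ≠ 0 := Complex.ofReal_ne_zero.2 hω.ne'
  have hlim := tendsto_evalM_washout_nhdsNE (β := ω) (s := jw ω)
    (hfactor ▸ mul_ne_zero hω' hone) ((2 * c) • (1 : Matrix (Fin n) (Fin n) ℝ))
  refine ⟨_, isAdmissible_washout hω (PosSemidef.one.smul (by positivity)) hγ,
    not_hasPole_of_tendsto hlim, ?_⟩
  rw [evalM_eq_of_tendsto hlim, hfactor, ← neg_smul, map_ofReal_smul_one, smul_smul]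
  congr 1
  rw [jw]
  push_cast
  field_simp
  linear_combination c * Complex.I_sq

lemma exists_isAdmissible_evalM_jw_eq (hγ : 0 < γ) (hω : 0 < ω) (hc : 0 ≤ c)
    (hS : S.IsHermitian) :
    ∃ P : Matrix (Fin n) (Fin n) (RatFunc ℝ), IsAdmissible P γ ∧ ¬ HasPole P (jw ω) ∧
      evalM P (jw ω) = S - (c * Complex.I) • 1 := by
  have hSc : (S + (c : ℂ) • 1).IsHermitian :=
    hS.add (isHermitian_one.smul (Complex.conj_ofReal c))
  obtain ⟨l, hl, P₁, hP₁, hpole₁, hvalue₁⟩ :=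
    exists_isAdmissible_evalM_jw_eq_add_smul_one (half_pos hγ) hω hSc
  obtain ⟨P₂, hP₂, hpole₂, hvalue₂⟩ :=
    exists_isAdmissible_evalM_jw_eq_neg_smul_one (n := n) (half_pos hγ) hω hl
  obtain ⟨P₃, hP₃, hpole₃, hvalue₃⟩ :=
    exists_isAdmissible_evalM_jw_eq_neg_one_add_I_smul_one (n := n) le_rfl hω hc
  refine ⟨P₁ + P₂ + P₃, ?_, not_hasPole_add (not_hasPole_add hpole₁ hpole₂) hpole₃, ?_⟩
  · simpa only [add_halves, add_zero] using (hP₁.add hP₂).add hP₃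
  · rw [evalM_add_of_not_hasPole (not_hasPole_add hpole₁ hpole₂) hpole₃,
      evalM_add_of_not_hasPole hpole₁ hpole₂, hvalue₁, hvalue₂, hvalue₃]
    module

end Interpolation

section Necessity

variable {P C : Matrix (Fin n) (Fin n) (RatFunc ℝ)} {A : Matrix (Fin n) (Fin n) ℝ} {γ ω : ℝ} {s : ℂ}

lemma loewnerLE_vecMulVec_self (x : Fin n → ℝ) : LoewnerLE (vecMulVec x x) ((x ⬝ᵥ x) • 1) := by
  refine .of_dotProduct_mulVec_nonneg
    ((isHermitian_smul_one _).sub (posSemidef_vecMulVec_self_star x).1) fun y => ?_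
  have hcauchy : (x ⬝ᵥ y) ^ 2 ≤ (x ⬝ᵥ x) * (y ⬝ᵥ y) := by
    simpa only [dotProduct, pow_two] using Finset.sum_mul_sq_le_sq_mul_sq Finset.univ x y
  rw [sub_mulVec, smul_mulVec, one_mulVec, vecMulVec_mulVec, dotProduct_sub, dotProduct_smul,
    star_trivial, op_smul_eq_smul, dotProduct_smul, dotProduct_comm y x, smul_eq_mul,
    smul_eq_mul, ← pow_two]
  exact sub_nonneg.2 hcauchy

lemma det_one_sub_vecMulVec_mul_eq_zero {x : Fin n → ℝ} (hx : x ⬝ᵥ A *ᵥ x ≠ 0) :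
    (1 - ((x ⬝ᵥ A *ᵥ x)⁻¹ • vecMulVec x x).map Complex.ofReal * A.map Complex.ofReal).det = 0 := by
  have hx0 : x ≠ 0 := fun h => hx (by rw [h, zero_dotProduct])
  have hreal : (1 - ((x ⬝ᵥ A *ᵥ x)⁻¹ • vecMulVec x x) * A).det = 0 := by
    refine exists_mulVec_eq_zero_iff.1 ⟨x, hx0, ?_⟩
    rw [sub_mulVec, one_mulVec, ← mulVec_mulVec, smul_mulVec, vecMulVec_mulVec, op_smul_eq_smul,
      inv_smul_smul₀ hx, sub_self]
  have hmap := (Complex.ofRealHom.map_det (1 - ((x ⬝ᵥ A *ᵥ x)⁻¹ • vecMulVec x x) * A)).symm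
  rwa [hreal, map_zero, map_sub, map_one, map_mul] at hmap

lemma exists_isHermitian_mulVec_eq {y v : Fin n → ℂ} (hy : y ≠ 0) (hv : (star y ⬝ᵥ v).im = 0) :
    ∃ S : Matrix (Fin n) (Fin n) ℂ, S.IsHermitian ∧ S *ᵥ y = v := by
  obtain ⟨r, hr⟩ : ∃ r : ℝ, star y ⬝ᵥ v = r := ⟨_, Complex.ext rfl hv⟩
  have hr' : star v ⬝ᵥ y = r := by
    rw [dotProduct_comm, ← star_star y, star_dotProduct_star, dotProduct_comm, hr, Complex.star_def,
      Complex.conj_ofReal]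
  obtain ⟨N, hN, hyy⟩ : ∃ N : ℝ, N ≠ 0 ∧ star y ⬝ᵥ y = N :=
    ⟨_, pow_ne_zero 2 (euclNorm_pos hy).ne', star_dotProduct_self_eq_euclNorm_sq y⟩
  refine ⟨(N : ℂ)⁻¹ • (vecMulVec v (star y) + vecMulVec y (star v)) -
    (r / N ^ 2 : ℂ) • vecMulVec y (star y), ?_, ?_⟩
  · simp [IsHermitian, conjTranspose_vecMulVec, add_comm]
  · have hN' : (N : ℂ) ≠ 0 := Complex.ofReal_ne_zero.2 hN
    rw [sub_mulVec, smul_mulVec, smul_mulVec, add_mulVec, vecMulVec_mulVec, vecMulVec_mulVec,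
      vecMulVec_mulVec, op_smul_eq_smul, op_smul_eq_smul, op_smul_eq_smul, hyy, hr', smul_add,
      inv_smul_smul₀ hN', smul_smul, smul_smul, add_sub_assoc, ← sub_smul]
    have hcancel : (N : ℂ)⁻¹ * r - r / N ^ 2 * N = 0 := by
      field_simp
      ring
    rw [hcancel, zero_smul, add_zero]

lemma FeedbackStable.det_evalM_ne_zero_of_inv_tendsto_zero (h : FeedbackStable P C)
    (hC : MemRHinf C) (hs : 0 ≤ s.re) {D : ℂ → Matrix (Fin n) (Fin n) ℂ}
    (hD : Tendsto D (𝓝[≠] s) (𝓝 0)) (hDP : ∀ᶠ z in 𝓝[≠] s, D z * evalM P z = 1) :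
    (evalM C s).det ≠ 0 := by
  set T := (1 - P * C)⁻¹ * P
  have hT : (1 - P * C) * T = P :=
    mul_nonsing_inv_cancel_left _ _ (isUnit_iff_ne_zero.2 h.1)
  have hT_lim := h.memRHinf_inv_mul.tendsto_nhdsNE hs
  have hloop : ∀ᶠ z in 𝓝[≠] s, D z * evalM T z - evalM C z * evalM T z = 1 := by
    filter_upwards [hDP, nhdsNE_le_cofinite s (evalM_mul (1 - P * C) T),
      nhdsNE_le_cofinite s (evalM_one_sub (P * C)), nhdsNE_le_cofinite s (evalM_mul P C)]
      with z hDPz hmul hsub hPC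
    rw [hT, hsub, hPC, sub_mul, one_mul, mul_assoc] at hmul
    rw [← hDPz, hmul, mul_sub, ← mul_assoc (D z) (evalM P z), hDPz, one_mul]
  have hlim := (hD.mul hT_lim).sub ((hC.tendsto_nhdsNE hs).mul hT_lim)
  have hvalue : 0 * evalM T s - evalM C s * evalM T s = 1 :=
    tendsto_nhds_unique hlim (tendsto_const_nhds.congr' (hloop.mono fun _ hz => hz.symm))
  rw [zero_mul, zero_sub, ← mul_neg] at hvalue
  exact det_ne_zero_of_right_inverse hvalue

lemma det_evalM_jw_ne_zero (hC : MemRHinf C) (h : ∀ P, IsAdmissible P γ → FeedbackStable P C)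
    (hγ : 0 < γ) (hω : 0 < ω) : (evalM C (jw ω)).det ≠ 0 := by
  have hω2 : ω ^ 2 ≠ 0 := pow_ne_zero 2 hω.ne'
  have hadmissible : IsAdmissible (n := n) (resonator ω ((γ * ω ^ 2) • 1) 0) γ :=
    isAdmissible_resonator_smul_one hω (by positivity)
      (by rw [mul_comm γ, inv_mul_cancel_left₀ hω2])
  set D : ℂ → Matrix (Fin n) (Fin n) ℂ := fun s => ((s - jw ω) * (s + jw ω) / (γ * ω ^ 2 : ℝ)) • 1
  have hD : Tendsto D (𝓝[≠] jw ω) (𝓝 0) := by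
    have hcont : Continuous D := by fun_prop
    simpa [D] using (hcont.tendsto (jw ω)).mono_left nhdsWithin_le_nhds
  refine (h _ hadmissible).det_evalM_ne_zero_of_inv_tendsto_zero hC (jw_re ω).ge hD ?_
  filter_upwards [nhdsNE_le_cofinite _ (evalM_resonator ω ((γ * ω ^ 2) • 1) 0),
    nhdsNE_le_cofinite _ (eventually_cofinite_ne (jw ω)),
    nhdsNE_le_cofinite _ (eventually_cofinite_ne (-jw ω))] with s hs hne hne_neg
  have hden : (s - jw ω) * (s + jw ω) ≠ 0 :=
    mul_ne_zero (sub_ne_zero.2 hne) (by rwa [← sub_neg_eq_add, sub_ne_zero])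
  have hk : ((γ * ω ^ 2 : ℝ) : ℂ) ≠ 0 := Complex.ofReal_ne_zero.2 (mul_ne_zero hγ.ne' hω2)
  rw [hs, mul_self_add_sq_eq, map_ofReal_smul_one, Matrix.map_zero _ Complex.ofReal_zero,
    smul_zero, add_zero, smul_smul, smul_mul_smul_comm, mul_one,
    ← div_eq_inv_mul, div_mul_div_cancel₀ hk, div_self hden, one_smul]

theorem isSNI_of_forall_feedbackStable (hC : MemRHinf C)
    (h : ∀ P, IsAdmissible P γ → FeedbackStable P C) (hγ : 0 < γ) : IsSNI C := by
  refine ⟨hC, fun ω hω => posDef_niKer_iff.2 fun x hx => ?_⟩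
  by_contra! him
  set y := evalM C (jw ω) *ᵥ x with hy_def
  have hy : y ≠ 0 := fun hy => det_evalM_jw_ne_zero hC h hγ hω
    (exists_mulVec_eq_zero_iff.1 ⟨x, hx, hy⟩)
  set c := (quadForm (evalM C (jw ω)) x).im / euclNorm y ^ 2
  have hreal : (star y ⬝ᵥ (x + (c * Complex.I) • y)).im = 0 := by
    have hconj : star y ⬝ᵥ x = star (quadForm (evalM C (jw ω)) x) := by
      rw [quadForm, ← star_dotProduct_star, star_star, dotProduct_comm]
    have hcy : c * euclNorm y ^ 2 = (quadForm (evalM C (jw ω)) x).im :=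
      div_mul_cancel₀ _ (pow_ne_zero 2 (euclNorm_pos hy).ne')
    rw [dotProduct_add, dotProduct_smul, star_dotProduct_self_eq_euclNorm_sq, hconj, smul_eq_mul,
      mul_right_comm, ← Complex.ofReal_mul, hcy, Complex.add_im, Complex.star_def,
      Complex.conj_im, Complex.im_ofReal_mul, Complex.I_im, mul_one, neg_add_cancel]
  obtain ⟨S, hS, hSy⟩ := exists_isHermitian_mulVec_eq hy hreal
  obtain ⟨P, hP, hpole, hvalue⟩ := exists_isAdmissible_evalM_jw_eq hγ hω
    (div_nonneg him (sq_nonneg _) : 0 ≤ c) hS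
  refine (h P hP).det_one_sub_mul_ne_zero hC (jw_re ω).ge hpole
    (exists_mulVec_eq_zero_iff.1 ⟨x, hx, ?_⟩)
  rw [sub_mulVec, one_mulVec, ← mulVec_mulVec, ← hy_def, hvalue, sub_mulVec, hSy, smul_mulVec,
    one_mulVec, add_sub_cancel_right, sub_self]

theorem posSemidef_evalInf_of_forall_feedbackStable (hC : MemRHinf C)
    (h : ∀ P, IsAdmissible P γ → FeedbackStable P C) (hγ : 0 < γ) : (evalInf C).PosSemidef := by
  have hNI := (isSNI_of_forall_feedbackStable hC h hγ).isNI
  refine .of_dotProduct_mulVec_nonneg hNI.isHermitian_evalInf fun x => ?_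
  rw [star_trivial]
  by_contra! hneg
  have hpsd : ((-(x ⬝ᵥ evalInf C *ᵥ x)⁻¹) • vecMulVec x x).PosSemidef :=
    (posSemidef_vecMulVec_self_star x).smul (neg_nonneg.2 (inv_nonpos.2 hneg.le))
  refine (h _ (isAdmissible_washout one_pos hpsd hγ.le)).det_one_sub_mul_evalInf_ne_zero hC
    (tendsto_evalM_washout_cocompact 1 _) ?_
  rw [neg_smul, neg_neg]
  exact det_one_sub_vecMulVec_mul_eq_zero hneg.ne

theorem loewnerLT_evalR_zero_of_forall_feedbackStable (hC : MemRHinf C)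
    (h : ∀ P, IsAdmissible P γ → FeedbackStable P C) (hγ : 0 < γ) :
    LoewnerLT (evalR C 0) (γ⁻¹ • 1) := by
  have hNI := (isSNI_of_forall_feedbackStable hC h hγ).isNI
  refine .of_dotProduct_mulVec_pos ((isHermitian_smul_one _).sub
    (hNI.isHermitian_evalR_zero hC.not_hasPole_zero)) fun x hx => ?_
  rw [star_trivial, sub_mulVec, smul_mulVec, one_mulVec, dotProduct_sub, dotProduct_smul,
    smul_eq_mul, sub_pos]
  by_contra! hle
  have hxx : 0 < x ⬝ᵥ x := by simpa using dotProduct_star_self_pos_iff.2 hx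
  have hpos : 0 < x ⬝ᵥ evalR C 0 *ᵥ x := (mul_pos (inv_pos.2 hγ) hxx).trans_le hle
  have hgain : (x ⬝ᵥ evalR C 0 *ᵥ x)⁻¹ * (x ⬝ᵥ x) ≤ γ := by
    rw [inv_mul_le_iff₀ hpos, mul_comm]
    exact (inv_mul_le_iff₀ hγ).1 hle
  have hadmissible := isAdmissible_map_C
    ((posSemidef_vecMulVec_self_star x).smul (inv_pos.2 hpos).le)
    ((loewnerLE_vecMulVec_self x).smul (inv_pos.2 hpos).le hgain)
  refine (h _ hadmissible).det_one_sub_mul_ne_zero (s := 0) hC le_rfl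
    (memRHinf_map_C _).not_hasPole_zero ?_
  rw [evalM_map_C, evalM_zero_eq_map_evalR]
  exact det_one_sub_vecMulVec_mul_eq_zero hpos.ne'

end Necessity

/-- converse theorem for NI uncertainty without origin poles and
bounded static gain. -/
theorem converse_N0_static_bound {n : ℕ} (C : Matrix (Fin n) (Fin n) (RatFunc ℝ)) (hC : MemRHinf C)
    (γ : ℝ) (hγ : 0 < γ) :
    ((∀ P : Matrix (Fin n) (Fin n) (RatFunc ℝ), IsNI P → ¬ HasPole P 0 →
        LoewnerLE (evalR P 0) (γ • 1) → FeedbackStable P C) ↔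
     (∀ P : Matrix (Fin n) (Fin n) (RatFunc ℝ), IsNI P → ¬ HasPole P 0 →
        LoewnerLE 0 (evalR P 0) → LoewnerLE (evalR P 0) (γ • 1) → FeedbackStable P C)) ∧
    ((∀ P : Matrix (Fin n) (Fin n) (RatFunc ℝ), IsNI P → ¬ HasPole P 0 →
        LoewnerLE (evalR P 0) (γ • 1) → FeedbackStable P C) ↔
     (IsSNI C ∧ (evalInf C).PosSemidef ∧ LoewnerLT (evalR C 0) (γ⁻¹ • 1))) := by
  have bounded_of_stable (h : ∀ P : Matrix (Fin n) (Fin n) (RatFunc ℝ), IsNI P → ¬ HasPole P 0 →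
      LoewnerLE 0 (evalR P 0) → LoewnerLE (evalR P 0) (γ • 1) → FeedbackStable P C) :
      IsBoundedSNI C γ := by
    have h' : ∀ P, IsAdmissible P γ → FeedbackStable P C :=
      fun P ⟨hP, h0, hnonneg, hle⟩ => h P hP h0 hnonneg hle
    exact ⟨isSNI_of_forall_feedbackStable hC h' hγ,
      posSemidef_evalInf_of_forall_feedbackStable hC h' hγ,
      loewnerLT_evalR_zero_of_forall_feedbackStable hC h' hγ⟩
  have stable_of_bounded (hB : IsBoundedSNI C γ) (P : Matrix (Fin n) (Fin n) (RatFunc ℝ))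
      (hP : IsNI P) (h0 : ¬ HasPole P 0) (hle : LoewnerLE (evalR P 0) (γ • 1)) :
      FeedbackStable P C := feedbackStable_of_isBoundedSNI hP h0 hle hB hγ
  exact ⟨⟨fun h P hP h0 _ hle => h P hP h0 hle, fun h => stable_of_bounded (bounded_of_stable h)⟩,
    fun h => bounded_of_stable fun P hP h0 _ hle => h P hP h0 hle, stable_of_bounded⟩

end NIControl
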